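/- Let Γ ⊂ PSL(3,ℂ) be a discrete group with LiG(ℙ²_ℂ∖C(Γ)) = 1 and let ℓ be the unique complex line contained in C(Γ). If the restricted group Γ|_ℓ ⊂ Bihol(ℓ) ≅ PSL(2,ℂ) is conjugate to a subgroup of the rotation group (the image of SU(2) in PSL(2,ℂ)), then LiG(Eq(Γ)) = 1. -/

import Mathlib

/-!
Let `ψ : ℂ² → W` be the parametrization of the plane `W` over the line `ℓ` in which `Γ` acts by
multiples of unitary matrices. Extending `ψ` by a vector outside `W` gives coordinates `(x, t)` on
`ℂ³`, with `ℓ` the line `t = 0`, in which every element of `Γ` is represented by a map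
`(x, t) ↦ (U x + t b, l t)` with `U` unitary and `l ≠ 0`: a complex similarity of the affine chart
`t = 1`, of ratio `1 / |l|` (`exists_simGroup`). The group is infinite, because a finite group
has `C(Γ) = ∅` (`CSet_eq_empty_of_finite`).

Either every element satisfies `|l| = 1`, or `Γ` contains an element with `|l| > 1`, a contraction
of the chart. In the second case this element fixes a point of the chart, which may be moved to the
origin; conjugating by its powers, discreteness forces all elements of `Γ` to fix the origin, i.e.
`b = 0` (`translation_eq_zero`).

In both cases the equicontinuity set contains every point with `x ≠ 0` and `t ≠ 0`: after rescaling,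
the matrices representing `Γ` lie in a compact set of nonzero matrices none of which kills such a
point, and this gives normality (`mem_eqSet_of_compact`, `mem_eqSet_of_closed`). On the other hand
it contains no point of `ℓ`: the vectors `(b, l)` are unbounded (in the isometric case by
discreteness and infiniteness), and along a sequence with `‖(b, l)‖ → ∞` the limits off `ℓ` are
constant, while on `ℓ` they are given by a unitary matrix (`notMem_eqSet`).

A line other than `ℓ` contains a point with `x ≠ 0` and `t ≠ 0`, so `ℓ` is the only line in the
complement of the equicontinuity set (`linesIn_compl_eqSet`).
-/

open scoped LinearAlgebra.Projectivization
open Projectivization Matrix Topology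

noncomputable section

abbrev V3 : Type := Fin 3 → ℂ
abbrev SL3 := Matrix.SpecialLinearGroup (Fin 3) ℂ
abbrev PSL3 := SL3 ⧸ Subgroup.center SL3
abbrev P2 := ℙ ℂ V3

instance : TopologicalSpace P2 := instTopologicalSpaceQuotient

/-- The action of `SL(3,ℂ)` on `ℙ²_ℂ`. -/
def smulP2 (A : SL3) : P2 → P2 :=
  Projectivization.map ((Matrix.SpecialLinearGroup.toLin' A : V3 ≃ₗ[ℂ] V3) : V3 →ₗ[ℂ] V3)
    (Matrix.SpecialLinearGroup.toLin' A).injective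

lemma smulP2_mk (A : SL3) (v : V3) (hv : v ≠ 0) :
    smulP2 A (Projectivization.mk ℂ v hv) =
      Projectivization.mk ℂ (Matrix.SpecialLinearGroup.toLin' A v)
        ((Matrix.SpecialLinearGroup.toLin' A).map_ne_zero_iff.mpr hv) := rfl

lemma smulP2_one : smulP2 (1 : SL3) = id := by
  funext x
  induction x using Projectivization.ind with
  | h v hv => simp [smulP2_mk]

lemma smulP2_mul (A B : SL3) : smulP2 (A * B) = smulP2 A ∘ smulP2 B := by
  funext x
  induction x using Projectivization.ind with
  | h v hv =>
    simp only [smulP2_mk, Function.comp_apply, _root_.map_mul]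
    rfl

lemma continuous_smulP2 (A : SL3) : Continuous (smulP2 A) := by
  unfold smulP2 Projectivization.map
  exact Continuous.quotient_map'
    ((((Matrix.SpecialLinearGroup.toLin' A : V3 ≃ₗ[ℂ] V3) :
        V3 →ₗ[ℂ] V3).continuous_of_finiteDimensional.comp
      continuous_subtype_val).subtype_mk _) _
lemma smulP2_center (A : SL3) (hA : A ∈ Subgroup.center SL3) : smulP2 A = id := by
  obtain ⟨r, hr3, hrA⟩ := Matrix.SpecialLinearGroup.mem_center_iff.mp hA
  have hr0 : r ≠ 0 := by
    intro h
    rw [h] at hr3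
    simp at hr3
  funext x
  induction x using Projectivization.ind with
  | h v hv =>
    have hAv : Matrix.SpecialLinearGroup.toLin' A v = r • v := by
      rw [Matrix.SpecialLinearGroup.toLin'_apply]
      have : ((A : Matrix (Fin 3) (Fin 3) ℂ)) = Matrix.scalar (Fin 3) r := by
        rw [← hrA]
      rw [this]
      funext i
      simp [Matrix.toLin'_apply, Matrix.scalar, Matrix.mulVec_diagonal]
  
    simp only [smulP2_mk, id_eq]
    rw [Projectivization.mk_eq_mk_iff]
    exact ⟨Units.mk0 r hr0, by simp [hAv]⟩

/-- The action of `SL(3,ℂ)` on `ℙ²` as a homomorphism into permutations. -/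
def slPerm : SL3 →* Equiv.Perm P2 where
  toFun A :=
    { toFun := smulP2 A
      invFun := smulP2 A⁻¹
      left_inv := fun x => by
        have := (smulP2_mul A⁻¹ A).symm
        simp only [inv_mul_cancel, smulP2_one] at this
        exact congrFun this x
      right_inv := fun x => by
        have := (smulP2_mul A A⁻¹).symm
        simp only [mul_inv_cancel, smulP2_one] at this
        exact congrFun this x }
  map_one' := by
    ext x
    simp [smulP2_one]
  map_mul' A B := by
    ext x
    simp [smulP2_mul]

/-- The action of `PSL(3,ℂ)` on `ℙ²` as a homomorphism into permutations. -/
def actHom : PSL3 →* Equiv.Perm P2 :=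
  QuotientGroup.lift (Subgroup.center SL3) slPerm (by
    intro A hA
    ext x
    simpa [slPerm] using congrFun (smulP2_center A hA) x)

/-- The action of an element of `PSL(3,ℂ)` on `ℙ²`. -/
def pact (g : PSL3) : P2 → P2 := actHom g

instance : MulAction PSL3 P2 where
  smul g x := pact g x
  one_smul x := by
    show pact 1 x = x
    simp [pact]
  mul_smul g h x := by
    show pact (g * h) x = pact g (pact h x)
    simp [pact]

lemma pact_mk (A : SL3) : pact ((QuotientGroup.mk A : PSL3)) = smulP2 A := by
  funext x
  simp [pact, actHom, slPerm]

lemma continuous_pact (g : PSL3) : Continuous (pact g) := by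
  obtain ⟨A, rfl⟩ := QuotientGroup.mk_surjective g
  rw [pact_mk]
  exact continuous_smulP2 A

/-- The action of an element of `PSL(3,ℂ)` on `ℙ²`, as a continuous map. -/
def pactCM (g : PSL3) : C(P2, P2) := ⟨pact g, continuous_pact g⟩
instance : TopologicalSpace SL3 := instTopologicalSpaceSubtype

/-- A complex line in `ℙ²_ℂ`: the set of points whose representing vectors lie in
a fixed 2-dimensional complex linear subspace of `ℂ³`. -/
def IsLine (ℓ : Set P2) : Prop :=
  ∃ W : Submodule ℂ V3, Module.finrank ℂ W = 2 ∧ ℓ = {p : P2 | p.submodule ≤ W}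

/-- The set of complex lines contained in a given subset of `ℙ²_ℂ`. -/
def linesIn (S : Set P2) : Set (Set P2) := {ℓ | IsLine ℓ ∧ ℓ ⊆ S}

/-- A family of lines is in general position if no point lies on three
(pairwise distinct) lines of the family. -/
def InGenPos (L : Set (Set P2)) : Prop :=
  ∀ p : P2, ∀ ℓ₁ ∈ L, ∀ ℓ₂ ∈ L, ∀ ℓ₃ ∈ L,
    p ∈ ℓ₁ → p ∈ ℓ₂ → p ∈ ℓ₃ → ℓ₁ = ℓ₂ ∨ ℓ₁ = ℓ₃ ∨ ℓ₂ = ℓ₃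

/-- The families of complex lines in general position contained in the complement of `Ω`. -/
def genFamilies (Ω : Set P2) : Set (Set (Set P2)) :=
  {L | (∀ ℓ ∈ L, IsLine ℓ ∧ ℓ ⊆ Ωᶜ) ∧ InGenPos L}

/-- `Li Ω` : the number (in `ℕ∞`) of complex lines contained in the complement of `Ω`. -/
def Li (Ω : Set P2) : ℕ∞ := (linesIn Ωᶜ).encard

/-- `LiG Ω` : the maximal number (in `ℕ∞`) of complex lines in general position contained
in the complement of `Ω`. -/
def LiG (Ω : Set P2) : ℕ∞ := ⨆ L ∈ genFamilies Ω, L.encard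

/-- `Γ` acts properly discontinuously on the nonempty open invariant set `Ω`. -/
def ActsPropDiscOn (Γ : Subgroup PSL3) (Ω : Set P2) : Prop :=
  Ω.Nonempty ∧ IsOpen Ω ∧ (∀ γ ∈ Γ, pact γ '' Ω = Ω) ∧
    ∀ K : Set P2, K ⊆ Ω → IsCompact K →
      {γ : PSL3 | γ ∈ Γ ∧ ((pact γ '' K) ∩ K).Nonempty}.Finite

/-- `Ω` is a maximal open set on which `Γ` acts properly discontinuously. -/
def MaxDisc (Γ : Subgroup PSL3) (Ω : Set P2) : Prop :=
  ActsPropDiscOn Γ Ω ∧ ∀ Ω' : Set P2, ActsPropDiscOn Γ Ω' → Ω ⊆ Ω' → Ω' = Ω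

/-- `L0 Γ` : the closure of the set of points with infinite isotropy group. -/
def L0 (Γ : Subgroup PSL3) : Set P2 :=
  closure {z : P2 | {γ : PSL3 | γ ∈ Γ ∧ pact γ z = z}.Infinite}

/-- The cluster points of the orbit `Γ z`. -/
def orbitCluster (Γ : Subgroup PSL3) (z : P2) : Set P2 :=
  {w : P2 | ∀ U ∈ nhds w, {γ : PSL3 | γ ∈ Γ ∧ pact γ z ∈ U}.Infinite}

/-- The cluster points of `Γ K` for a set `K`. -/
def setCluster (Γ : Subgroup PSL3) (K : Set P2) : Set P2 :=
  {w : P2 | ∀ U ∈ nhds w, {γ : PSL3 | γ ∈ Γ ∧ ((pact γ '' K) ∩ U).Nonempty}.Infinite}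

/-- `L1 Γ` : the closure of the set of cluster points of orbits `Γ z`, `z ∉ L0 Γ`. -/
def L1 (Γ : Subgroup PSL3) : Set P2 :=
  closure (⋃ z ∈ (L0 Γ)ᶜ, orbitCluster Γ z)

/-- `L2 Γ` : the closure of the set of cluster points of `Γ K`,
`K` a compact subset of `ℙ²_ℂ ∖ (L0 Γ ∪ L1 Γ)`. -/
def L2 (Γ : Subgroup PSL3) : Set P2 :=
  closure (⋃ K ∈ {K : Set P2 | IsCompact K ∧ K ⊆ (L0 Γ ∪ L1 Γ)ᶜ}, setCluster Γ K)

/-- The Kulkarni limit set `Λ(Γ)`. -/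
def kulkarniLimit (Γ : Subgroup PSL3) : Set P2 := L0 Γ ∪ L1 Γ ∪ L2 Γ

/-- The Kulkarni discontinuity region `Ω(Γ)`. -/
def kulkarniRegion (Γ : Subgroup PSL3) : Set P2 := (kulkarniLimit Γ)ᶜ

/-- `C(Γ)` : the closure of the union of the Kulkarni limit sets of the cyclic
subgroups generated by the elements of `Γ`. -/
def CSet (Γ : Subgroup PSL3) : Set P2 :=
  closure (⋃ γ ∈ Γ, kulkarniLimit (Subgroup.zpowers γ))

/-- The equicontinuity set of `Γ` : points having a neighborhood `U` on which the
restrictions of the elements of `Γ` form a normal family, i.e. a relatively compact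
subset of `C(U, ℙ²_ℂ)` for the compact-open topology. -/
def eqSet (Γ : Subgroup PSL3) : Set P2 :=
  {z : P2 | ∃ U : Set P2, IsOpen U ∧ z ∈ U ∧
    IsCompact (closure {f : C(U, P2) | ∃ γ ∈ Γ, f = (pactCM γ).restrict U})}

/-- A vertex of a family `L` of lines lying in the complement of `Ω`. -/
def IsVertex (Ω : Set P2) (L : Set (Set P2)) (v : P2) : Prop :=
  ∃ ℓ₁ ∈ L, ∃ ℓ₂ ∈ L, ℓ₁ ≠ ℓ₂ ∧ ∃ C : Set (Set P2), C.Infinite ∧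
    (∀ ℓ ∈ C, IsLine ℓ ∧ ℓ ⊆ Ωᶜ) ∧ ℓ₁ ∩ ℓ₂ ∩ ⋂₀ C = {v}

open Classical

/-- Projection from the point `p` onto the line determined by `W` : `projPt p W x` is
the intersection point of the line through `p` and `x` with the line determined by `W`
(junk value if it is not unique). -/
def projPt (p : P2) (W : Submodule ℂ V3) (x : P2) : P2 :=
  if h : ∃ y : P2, y.submodule ≤ W ∧ y.submodule ≤ p.submodule ⊔ x.submodule
  then h.choose else x


/-! ### Topology of the projective plane -/

lemma isOpenQuotientMap_mkP2 :
    IsOpenQuotientMap (Projectivization.mk' ℂ : {v : V3 // v ≠ 0} → P2) := by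
  have hcont : Continuous (Projectivization.mk' ℂ : {v : V3 // v ≠ 0} → P2) :=
    continuous_quotient_mk'
  refine ⟨?_, hcont, ?_⟩
  · intro p
    exact ⟨⟨p.rep, p.rep_nonzero⟩, p.mk_rep⟩
  · intro S hS
    have hq : IsQuotientMap (Projectivization.mk' ℂ : {v : V3 // v ≠ 0} → P2) :=
      isQuotientMap_quotient_mk'
    rw [← hq.isOpen_preimage]
    -- the saturation of `S` is the union of its translates by nonzero scalars
    have : (Projectivization.mk' ℂ : {v : V3 // v ≠ 0} → P2) ⁻¹'
        (Projectivization.mk' ℂ '' S) =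
        ⋃ a : ℂˣ, (fun v : {v : V3 // v ≠ 0} =>
          (⟨a • (v : V3), (smul_ne_zero_iff_ne a).mpr v.2⟩ : {v : V3 // v ≠ 0})) ⁻¹' S := by
      ext v
      simp only [Set.mem_preimage, Set.mem_image, Set.mem_iUnion]
      constructor
      · rintro ⟨w, hw, h⟩
        rw [mk'_eq_mk, mk'_eq_mk, mk_eq_mk_iff] at h
        obtain ⟨a, ha⟩ := h
        refine ⟨a, ?_⟩
        convert hw
      · rintro ⟨a, ha⟩
        refine ⟨_, ha, ?_⟩
        rw [mk'_eq_mk, mk'_eq_mk, mk_eq_mk_iff]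
        exact ⟨a, rfl⟩
    rw [this]
    refine isOpen_iUnion fun a => hS.preimage ?_
    exact (continuous_subtype_val.const_smul a).subtype_mk _

lemma mk_congr {v w : V3} (h : v = w) (hv : v ≠ 0) (hw : w ≠ 0) :
    (Projectivization.mk ℂ v hv : P2) = Projectivization.mk ℂ w hw := by
  subst h; rfl

lemma mk_smul_eq {v w : V3} {c : ℂ} (h : v = c • w) (hv : v ≠ 0) (hw : w ≠ 0) :
    (Projectivization.mk ℂ v hv : P2) = Projectivization.mk ℂ w hw := by
  rw [mk_eq_mk_iff']
  exact ⟨c, h.symm⟩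

/-- Distinct points are separated by the continuous functions `[v] ↦ v i * conj (v j) / ∑ |v k|²`,
the entries of the orthogonal projection onto the line spanned by `v`. -/
instance : T2Space P2 := by
  have hpos : ∀ v : V3, v ≠ 0 → (∑ k, v k * star (v k)) ≠ 0 := by
    intro v hv h0
    apply hv
    have h1 : ∑ k, ‖v k‖ ^ 2 = 0 := by
      have h2 : ∀ k, v k * star (v k) = ((‖v k‖ ^ 2 : ℝ) : ℂ) := fun k => by
        rw [← starRingEnd_apply, Complex.mul_conj']
        push_cast
        rfl
      simp_rw [h2] at h0
      exact_mod_cast h0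
    funext k
    have h3 := (Finset.sum_eq_zero_iff_of_nonneg fun k _ => sq_nonneg ‖v k‖).mp h1 k
      (Finset.mem_univ k)
    simpa using h3
  let f : P2 → (Fin 3 → Fin 3 → ℂ) := Projectivization.lift
    (fun v i j => (v : V3) i * star ((v : V3) j) / ∑ k, (v : V3) k * star ((v : V3) k)) (by
      intro a b t hab
      have ht : t ≠ 0 := by
        rintro rfl
        exact a.2 (by simpa using hab)
      funext i j
      simp only [hab, Pi.smul_apply, smul_eq_mul, star_mul']
      have : (∑ k, t * (b : V3) k * (star t * star ((b : V3) k)))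
          = (t * star t) * ∑ k, (b : V3) k * star ((b : V3) k) := by
        rw [Finset.mul_sum]; exact Finset.sum_congr rfl fun k _ => by ring
      rw [this]
      have ht' : star t ≠ 0 := star_ne_zero.mpr ht
      have := hpos b b.2
      field_simp)
  have hf : Continuous f := by
    rw [isOpenQuotientMap_mkP2.isQuotientMap.continuous_iff]
    show Continuous (fun v : {v : V3 // v ≠ 0} => fun i j =>
      (v : V3) i * star ((v : V3) j) / ∑ k, (v : V3) k * star ((v : V3) k))
    refine continuous_pi fun i => continuous_pi fun j => ?_
    have hi : ∀ k, Continuous fun v : {v : V3 // v ≠ 0} => (v : V3) k := fun k =>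
      (continuous_apply k).comp continuous_subtype_val
    exact Continuous.div ((hi i).mul (hi j).star)
      (continuous_finsetSum _ fun k _ => (hi k).mul (hi k).star) fun v => hpos v v.2
  refine T2Space.of_injective_continuous (f := f) ?_ hf
  intro p q hpq
  induction p using Projectivization.ind with
  | h v hv =>
  induction q using Projectivization.ind with
  | h w hw =>
  obtain ⟨j, hj⟩ : ∃ j, v j ≠ 0 := by
    by_contra! h
    exact hv (funext h)
  have key : ∀ i, v i * star (v j) / (∑ k, v k * star (v k))
      = w i * star (w j) / ∑ k, w k * star (w k) := fun i => congrFun (congrFun hpq i) j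
  have h1 := hpos v hv
  have h2 := hpos w hw
  have h3 : star (v j) ≠ 0 := star_ne_zero.mpr hj
  refine mk_smul_eq (c := (∑ k, v k * star (v k)) * star (w j) /
    ((∑ k, w k * star (w k)) * star (v j))) ?_ hv hw
  funext i
  have := key i
  rw [div_eq_div_iff h1 h2] at this
  simp only [Pi.smul_apply, smul_eq_mul]
  rw [div_mul_eq_mul_div, eq_div_iff (mul_ne_zero h2 h3)]
  linear_combination this

lemma tendsto_mk {ι : Type*} {F : Filter ι} {f : ι → V3} {v : V3} (h : Filter.Tendsto f F (𝓝 v))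
    (hf : ∀ i, f i ≠ 0) (hv : v ≠ 0) :
    Filter.Tendsto (fun i => (Projectivization.mk ℂ (f i) (hf i) : P2)) F
      (𝓝 (Projectivization.mk ℂ v hv)) := by
  have h1 : Filter.Tendsto (fun i => (⟨f i, hf i⟩ : {v : V3 // v ≠ 0})) F (𝓝 ⟨v, hv⟩) :=
    tendsto_subtype_rng.mpr h
  exact (isOpenQuotientMap_mkP2.continuous.tendsto _).comp h1

/-! ### Matrices representing projective transformations -/

lemma coe_mul_SL3 (A B : SL3) : (A * B).1 = A.1 * B.1 :=
  Matrix.SpecialLinearGroup.coe_mul A B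

lemma coe_inv_mul_SL3 (A : SL3) : (A⁻¹).1 * A.1 = 1 := by
  rw [← coe_mul_SL3, inv_mul_cancel]
  rfl

/-- The matrix `M` represents `γ ∈ PSL(3,ℂ)`: some lift of `γ` to `SL(3,ℂ)` is a nonzero
multiple of `M`. -/
def Represents (M : Matrix (Fin 3) (Fin 3) ℂ) (γ : PSL3) : Prop :=
  ∃ A : SL3, (QuotientGroup.mk A : PSL3) = γ ∧ ∃ c : ℂ, c ≠ 0 ∧
    (A : Matrix (Fin 3) (Fin 3) ℂ) = c • M

lemma Represents.smul {M : Matrix (Fin 3) (Fin 3) ℂ} {γ : PSL3} (h : Represents M γ) {r : ℂ}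
    (hr : r ≠ 0) : Represents (r • M) γ := by
  obtain ⟨A, hA, c, hc, hM⟩ := h
  refine ⟨A, hA, c * r⁻¹, mul_ne_zero hc (inv_ne_zero hr), ?_⟩
  rw [hM, smul_smul, mul_assoc, inv_mul_cancel₀ hr, mul_one]

lemma Represents.mul {M N : Matrix (Fin 3) (Fin 3) ℂ} {γ δ : PSL3} (h : Represents M γ)
    (h' : Represents N δ) : Represents (M * N) (γ * δ) := by
  obtain ⟨A, rfl, c, hc, hM⟩ := h
  obtain ⟨B, rfl, d, hd, hN⟩ := h'
  refine ⟨A * B, rfl, c * d, mul_ne_zero hc hd, ?_⟩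
  rw [coe_mul_SL3, hM, hN, smul_mul_smul_comm]

lemma Represents.inv {M N : Matrix (Fin 3) (Fin 3) ℂ} {γ : PSL3} (h : Represents M γ)
    (hMN : M * N = 1) : Represents N γ⁻¹ := by
  obtain ⟨A, rfl, c, hc, hM⟩ := h
  refine ⟨A⁻¹, rfl, c⁻¹, inv_ne_zero hc, ?_⟩
  have h1 : ((A⁻¹ : SL3) : Matrix (Fin 3) (Fin 3) ℂ) * (A : Matrix (Fin 3) (Fin 3) ℂ) = 1 :=
    coe_inv_mul_SL3 A
  calc ((A⁻¹ : SL3) : Matrix (Fin 3) (Fin 3) ℂ)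
      = (A⁻¹ : SL3) * (M * N) := by rw [hMN, mul_one]
    _ = c⁻¹ • (((A⁻¹ : SL3) : Matrix (Fin 3) (Fin 3) ℂ) * (c • M) * N) := by
        rw [mul_smul_comm, smul_mul_assoc, smul_smul, inv_mul_cancel₀ hc, one_smul, mul_assoc]
    _ = c⁻¹ • N := by rw [← hM, h1, one_mul]

lemma Represents.mulVec_ne_zero {M : Matrix (Fin 3) (Fin 3) ℂ} {γ : PSL3} (h : Represents M γ)
    {v : V3} (hv : v ≠ 0) : M *ᵥ v ≠ 0 := by
  obtain ⟨A, rfl, c, hc, hM⟩ := h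
  intro h0
  have : Matrix.SpecialLinearGroup.toLin' A v = 0 := by
    rw [Matrix.SpecialLinearGroup.toLin'_apply, Matrix.toLin'_apply, hM, Matrix.smul_mulVec, h0,
      smul_zero]
  exact hv ((Matrix.SpecialLinearGroup.toLin' A).map_eq_zero_iff.mp this)

lemma Represents.pact_mk {M : Matrix (Fin 3) (Fin 3) ℂ} {γ : PSL3} (h : Represents M γ)
    {v : V3} (hv : v ≠ 0) (hMv : M *ᵥ v ≠ 0) :
    pact γ (Projectivization.mk ℂ v hv) = Projectivization.mk ℂ (M *ᵥ v) hMv := by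
  obtain ⟨A, rfl, c, hc, hM⟩ := h
  rw [_root_.pact_mk, smulP2_mk]
  refine mk_smul_eq (c := c) ?_ _ _
  rw [Matrix.SpecialLinearGroup.toLin'_apply, Matrix.toLin'_apply, hM, Matrix.smul_mulVec]

/-! ### A criterion for normality -/

/-- The projective map induced by `M`, with the value `p` at a point `p` of the kernel. -/
def projMap (M : Matrix (Fin 3) (Fin 3) ℂ) (p : P2) : P2 :=
  if h : M *ᵥ p.rep ≠ 0 then Projectivization.mk ℂ _ h else p

lemma mulVec_rep_ne_zero_iff (M : Matrix (Fin 3) (Fin 3) ℂ) {v : V3} (hv : v ≠ 0) :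
    M *ᵥ (Projectivization.mk ℂ v hv : P2).rep ≠ 0 ↔ M *ᵥ v ≠ 0 := by
  obtain ⟨a, ha⟩ := exists_smul_eq_mk_rep ℂ v hv
  rw [← ha, Units.smul_def, Matrix.mulVec_smul, ← Units.smul_def, smul_ne_zero_iff_ne]

lemma projMap_mk (M : Matrix (Fin 3) (Fin 3) ℂ) {v : V3} (hv : v ≠ 0) (h : M *ᵥ v ≠ 0) :
    projMap M (Projectivization.mk ℂ v hv) = Projectivization.mk ℂ (M *ᵥ v) h := by
  have h' := (mulVec_rep_ne_zero_iff M hv).mpr h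
  rw [projMap, dif_pos h']
  obtain ⟨a, ha⟩ := exists_smul_eq_mk_rep ℂ v hv
  refine mk_smul_eq (c := a) ?_ _ _
  rw [← ha, Units.smul_def, Matrix.mulVec_smul]

lemma continuousAt_projMap (M : Matrix (Fin 3) (Fin 3) ℂ) {v : V3} (hv : v ≠ 0)
    (h : M *ᵥ v ≠ 0) :
    ContinuousAt (fun x : Matrix (Fin 3) (Fin 3) ℂ × P2 => projMap x.1 x.2)
      (M, Projectivization.mk ℂ v hv) := by
  have hq := IsOpenQuotientMap.prodMap
    (IsOpenQuotientMap.id (X := Matrix (Fin 3) (Fin 3) ℂ)) isOpenQuotientMap_mkP2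
  have : (M, (Projectivization.mk ℂ v hv : P2)) =
    Prod.map id (Projectivization.mk' ℂ) (M, (⟨v, hv⟩ : {v : V3 // v ≠ 0})) := rfl
  rw [this, ← hq.continuousAt_comp_iff]
  have hc : Continuous (fun x : Matrix (Fin 3) (Fin 3) ℂ × {v : V3 // v ≠ 0} =>
      x.1 *ᵥ (x.2 : V3)) := by fun_prop
  let S : Set (Matrix (Fin 3) (Fin 3) ℂ × {v : V3 // v ≠ 0}) := {x | x.1 *ᵥ (x.2 : V3) ≠ 0}
  have hS : IsOpen S := isOpen_ne_fun hc continuous_const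
  refine ContinuousOn.continuousAt (s := S) ?_ (hS.mem_nhds h)
  rw [continuousOn_iff_continuous_domRestrict]
  have : S.domRestrict ((fun x : Matrix (Fin 3) (Fin 3) ℂ × P2 => projMap x.1 x.2) ∘
      Prod.map id (Projectivization.mk' ℂ)) =
      fun x : S => (Projectivization.mk' ℂ ⟨x.1.1 *ᵥ (x.1.2 : V3), x.2⟩ : P2) := by
    funext x
    exact projMap_mk x.1.1 x.1.2.2 x.2
  rw [this]
  exact isOpenQuotientMap_mkP2.continuous.comp
    ((hc.comp continuous_subtype_val).subtype_mk _)

/-- If all elements of `Γ` are represented by matrices from a compact set `K`, then `Γ` is normal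
near each point lying in the kernel of no element of `K`: the restrictions of the elements of `Γ`
lie in the image of `K` under a continuous map into `C(U, ℙ²)`. -/
lemma mem_eqSet_of_compact (Γ : Subgroup PSL3) {K : Set (Matrix (Fin 3) (Fin 3) ℂ)}
    (hK : IsCompact K) (hΓ : ∀ γ ∈ Γ, ∃ M ∈ K, Represents M γ) {v : V3} (hv : v ≠ 0)
    (hKv : ∀ M ∈ K, M *ᵥ v ≠ 0) : (Projectivization.mk ℂ v hv : P2) ∈ eqSet Γ := by
  let O : Set P2 := {p | ∀ M ∈ K, M *ᵥ p.rep ≠ 0}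
  have hO : IsOpen O := by
    rw [← isOpenQuotientMap_mkP2.isQuotientMap.isOpen_preimage]
    have : (Projectivization.mk' ℂ : {v : V3 // v ≠ 0} → P2) ⁻¹' O =
        {v : {v : V3 // v ≠ 0} | ∀ M ∈ K, M *ᵥ (v : V3) ≠ 0} := by
      ext v
      exact forall₂_congr fun M _ => mulVec_rep_ne_zero_iff M v.2
    rw [this, isOpen_iff_mem_nhds]
    intro w hw
    refine hK.eventually_forall_of_forall_eventually fun M hM => ?_
    have hc : Continuous (fun x : {v : V3 // v ≠ 0} × Matrix (Fin 3) (Fin 3) ℂ =>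
      x.2 *ᵥ (x.1 : V3)) := by fun_prop
    exact (isOpen_ne_fun hc continuous_const).mem_nhds (hw M hM)
  refine ⟨O, hO, fun M hM => (mulVec_rep_ne_zero_iff M hv).mpr (hKv M hM), ?_⟩
  let Φ : C(K × O, P2) := ⟨fun x => projMap x.1 x.2, by
    rw [continuous_iff_continuousAt]
    rintro ⟨⟨M, hM⟩, ⟨p, hp⟩⟩
    have h1 : ContinuousAt (fun x : Matrix (Fin 3) (Fin 3) ℂ × P2 => projMap x.1 x.2)
        (M, p) := by
      have := continuousAt_projMap M p.rep_nonzero (hp M hM)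
      rwa [p.mk_rep] at this
    exact ContinuousAt.comp
      (f := fun x : K × O => ((x.1 : Matrix (Fin 3) (Fin 3) ℂ), (x.2 : P2)))
      (g := fun x : Matrix (Fin 3) (Fin 3) ℂ × P2 => projMap x.1 x.2)
      (x := ((⟨M, hM⟩, ⟨p, hp⟩) : K × O)) h1 (by fun_prop)⟩
  have : CompactSpace K := isCompact_iff_compactSpace.mp hK
  refine (isCompact_range Φ.curry.continuous).closure_of_subset ?_
  rintro f ⟨γ, hγ, rfl⟩
  obtain ⟨M, hM, hMγ⟩ := hΓ γ hγ
  refine ⟨⟨M, hM⟩, ?_⟩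
  ext p
  obtain ⟨p, hp⟩ := p
  show projMap M p = pact γ p
  have h1 := projMap_mk M p.rep_nonzero (hp M hM)
  have h2 := hMγ.pact_mk p.rep_nonzero (hp M hM)
  rw [p.mk_rep] at h1 h2
  rw [h1, h2]

/-! ### Discreteness -/

instance : IsTopologicalGroup SL3 := Matrix.SpecialLinearGroup.topologicalGroup

lemma discrete_eventually_const (Γ : Subgroup PSL3) (hΓ : DiscreteTopology ↥Γ) {ι : Type*}
    {F : Filter ι} [F.NeBot] {A : ι → SL3} {A₀ : SL3} (hA : Filter.Tendsto A F (𝓝 A₀))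
    (hmem : ∀ i, (QuotientGroup.mk (A i) : PSL3) ∈ Γ) :
    ∃ γ : PSL3, ∀ᶠ i in F, (QuotientGroup.mk (A i) : PSL3) = γ := by
  have h1 : Filter.Tendsto (fun i : ι × ι => (QuotientGroup.mk (A i.1 * (A i.2)⁻¹) : PSL3))
      (F ×ˢ F) (𝓝 1) := by
    have h2 : Filter.Tendsto (fun i : ι × ι => A i.1 * (A i.2)⁻¹) (F ×ˢ F) (𝓝 (A₀ * A₀⁻¹)) :=
      (hA.comp Filter.tendsto_fst).mul (hA.comp Filter.tendsto_snd).inv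
    rw [mul_inv_cancel] at h2
    exact ((QuotientGroup.continuous_mk (N := Subgroup.center SL3)).tendsto _).comp h2
  have h3 : Filter.Tendsto (fun i : ι × ι => (⟨QuotientGroup.mk (A i.1 * (A i.2)⁻¹),
      Γ.mul_mem (hmem i.1) (Γ.inv_mem (hmem i.2))⟩ : Γ)) (F ×ˢ F) (𝓝 1) :=
    tendsto_subtype_rng.mpr h1
  rw [nhds_discrete, Filter.tendsto_pure] at h3
  obtain ⟨pa, hpa, pb, hpb, h⟩ := Filter.eventually_prod_iff.mp h3
  obtain ⟨j, hj⟩ := hpb.exists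
  refine ⟨QuotientGroup.mk (A j), hpa.mono fun i hi => ?_⟩
  have := congrArg Subtype.val (h hi hj)
  have h4 : (QuotientGroup.mk (A i) : PSL3) * (QuotientGroup.mk (A j) : PSL3)⁻¹ = 1 := this
  exact mul_inv_eq_one.mp h4

/-- A family in a discrete group represented by matrices converging, along an ultrafilter, to an
invertible matrix is constant along that ultrafilter. -/
lemma discrete_eventually_const' (Γ : Subgroup PSL3) (hΓ : DiscreteTopology ↥Γ) {ι : Type*}
    {F : Ultrafilter ι} {M : ι → Matrix (Fin 3) (Fin 3) ℂ} {M₀ : Matrix (Fin 3) (Fin 3) ℂ}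
    (hM : Filter.Tendsto M F (𝓝 M₀)) (hdet : M₀.det ≠ 0) {g : ι → PSL3} (hg : ∀ i, g i ∈ Γ)
    (hrep : ∀ i, Represents (M i) (g i)) : ∃ γ : PSL3, ∀ᶠ i in F, g i = γ := by
  choose A hA c hc hcM using hrep
  -- `det A = 1` forces `c i ^ 3 * det (M i) = 1`, so `c` is bounded along the ultrafilter
  have hdetc : ∀ i, c i ^ 3 * (M i).det = 1 := by
    intro i
    have := (A i).det_coe
    rw [hcM i, Matrix.det_smul] at this
    simpa using this
  have hdetM : Filter.Tendsto (fun i => (M i).det) F (𝓝 M₀.det) :=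
    ((continuous_id.matrix_det).tendsto M₀).comp hM
  have hc3 : Filter.Tendsto (fun i => c i ^ 3) F (𝓝 M₀.det⁻¹) := by
    refine (hdetM.inv₀ hdet).congr fun i => ?_
    exact (eq_inv_of_mul_eq_one_left (hdetc i)).symm
  have hbd : ∀ᶠ i in (F : Filter ι), c i ∈ Metric.closedBall (0 : ℂ) (‖M₀.det⁻¹‖ + 1) := by
    have := hc3.norm.eventually_lt_const (lt_add_one _)
    filter_upwards [this] with i hi
    rw [norm_pow] at hi
    rw [mem_closedBall_zero_iff]
    by_contra! hlt
    have h1 : 1 ≤ ‖c i‖ := by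
      have := norm_nonneg (M₀.det⁻¹)
      linarith
    have h2 : ‖c i‖ ≤ ‖c i‖ ^ 3 := le_self_pow₀ h1 (by norm_num)
    linarith
  obtain ⟨c₀, -, hc₀⟩ := (isCompact_closedBall (0 : ℂ) (‖M₀.det⁻¹‖ + 1)).ultrafilter_le_nhds
    (F.map c) (Filter.le_principal_iff.mpr hbd)
  have hc₀' : Filter.Tendsto c F (𝓝 c₀) := hc₀
  have hAlim : Filter.Tendsto (fun i => (A i : Matrix (Fin 3) (Fin 3) ℂ)) F (𝓝 (c₀ • M₀)) := by
    simp_rw [hcM]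
    exact hc₀'.smul hM
  have hdet1 : (c₀ • M₀).det = 1 := by
    have h1 := ((continuous_id.matrix_det).tendsto (c₀ • M₀)).comp hAlim
    have h2 : Filter.Tendsto (fun i => (A i : Matrix (Fin 3) (Fin 3) ℂ).det) F (𝓝 1) := by
      exact tendsto_const_nhds.congr fun i => (A i).2.symm
    exact tendsto_nhds_unique h1 h2
  have hA0 : Filter.Tendsto A F (𝓝 (⟨c₀ • M₀, hdet1⟩ : SL3)) := tendsto_subtype_rng.mpr hAlim
  obtain ⟨γ, hγ⟩ := discrete_eventually_const Γ hΓ hA0 (fun i => by rw [hA]; exact hg i)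
  exact ⟨γ, hγ.mono fun i hi => by rw [← hA, hi]⟩

/-- A finite group has `C(Γ) = ∅`. -/
lemma CSet_eq_empty_of_finite (Γ : Subgroup PSL3) [Finite Γ] : CSet Γ = ∅ := by
  have hk : ∀ γ ∈ Γ, kulkarniLimit (Subgroup.zpowers γ) = ∅ := by
    intro γ hγ
    have hfin : ∀ P : PSL3 → Prop, ¬ {δ | δ ∈ Subgroup.zpowers γ ∧ P δ}.Infinite := by
      intro P
      rw [Set.not_infinite]
      refine (Set.toFinite (Γ : Set PSL3)).subset fun δ hδ => ?_
      exact (Subgroup.zpowers_le.mpr hγ) hδ.1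
    have h0 : L0 (Subgroup.zpowers γ) = ∅ := by simp [L0, hfin]
    have hc : ∀ z, orbitCluster (Subgroup.zpowers γ) z = ∅ := by
      intro z
      rw [Set.eq_empty_iff_forall_notMem]
      exact fun w hw => hfin _ (hw _ Filter.univ_mem)
    have hs : ∀ K, setCluster (Subgroup.zpowers γ) K = ∅ := by
      intro z
      rw [Set.eq_empty_iff_forall_notMem]
      exact fun w hw => hfin _ (hw _ Filter.univ_mem)
    have h1 : L1 (Subgroup.zpowers γ) = ∅ := by simp [L1, hc]
    have h2 : L2 (Subgroup.zpowers γ) = ∅ := by simp [L2, hs]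
    simp [kulkarniLimit, h0, h1, h2]
  rw [CSet, closure_empty_iff]
  simpa using hk

/-! ### Similarities in adapted coordinates -/

lemma isCompact_unitaryGroup :
    IsCompact (Matrix.unitaryGroup (Fin 2) ℂ : Set (Matrix (Fin 2) (Fin 2) ℂ)) := by
  have hb : IsCompact {U : Matrix (Fin 2) (Fin 2) ℂ |
      ∀ i j, U i j ∈ Metric.closedBall (0 : ℂ) 1} := by
    have := isCompact_univ_pi (fun _ : Fin 2 =>
      isCompact_univ_pi (fun _ : Fin 2 => isCompact_closedBall (0 : ℂ) 1))
    have heq : {U : Matrix (Fin 2) (Fin 2) ℂ | ∀ i j, U i j ∈ Metric.closedBall (0 : ℂ) 1} =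
        Set.univ.pi (fun _ : Fin 2 => Set.univ.pi
          (fun _ : Fin 2 => Metric.closedBall (0 : ℂ) 1)) := by
      apply Set.ext
      intro U
      exact ⟨fun h i _ j _ => h i j, fun h i j => h i trivial j trivial⟩
    rw [heq]
    exact this
  have hc : IsClosed {U : Matrix (Fin 2) (Fin 2) ℂ | U * star U = 1} :=
    isClosed_eq (by fun_prop) continuous_const
  refine hb.of_isClosed_subset ?_ ?_
  · convert hc using 1
    ext U
    exact Matrix.mem_unitaryGroup_iff
  · intro U hU i j
    rw [mem_closedBall_zero_iff]
    exact entry_norm_bound_of_unitary hU i j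

lemma exists_tendsto_unitary {ι : Type*} (F : Ultrafilter ι) {U : ι → Matrix (Fin 2) (Fin 2) ℂ}
    (hU : ∀ i, U i ∈ Matrix.unitaryGroup (Fin 2) ℂ) :
    ∃ U₀ ∈ Matrix.unitaryGroup (Fin 2) ℂ, Filter.Tendsto U F (𝓝 U₀) :=
  isCompact_unitaryGroup.ultrafilter_le_nhds (F.map U)
    (Filter.le_principal_iff.mpr (Filter.mem_map.mpr (Filter.Eventually.of_forall hU)))

lemma unitary_mulVec_inj {U : Matrix (Fin 2) (Fin 2) ℂ} (hU : U ∈ Matrix.unitaryGroup (Fin 2) ℂ)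
    {x y : Fin 2 → ℂ} (h : U *ᵥ x = U *ᵥ y) : x = y := by
  have := congrArg (fun z => star U *ᵥ z) h
  simpa only [Matrix.mulVec_mulVec, Matrix.mem_unitaryGroup_iff'.mp hU, Matrix.one_mulVec]
    using this

/-- The matrix, in the standard basis of `ℂ³`, of the linear map `(x, t) ↦ (U x + t b, l t)` of
`ℂ² × ℂ`, transported by the coordinates `E`. For `U` unitary and `l ≠ 0` it is the complex
similarity `x ↦ l⁻¹ (U x + b)` of the affine chart `t = 1`. -/
def simMat (E : ((Fin 2 → ℂ) × ℂ) ≃ₗ[ℂ] V3) (U : Matrix (Fin 2) (Fin 2) ℂ) (b : Fin 2 → ℂ)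
    (l : ℂ) : Matrix (Fin 3) (Fin 3) ℂ :=
  LinearMap.toMatrix' (E.toLinearMap ∘ₗ
    (LinearMap.prod (LinearMap.coprod U.mulVecLin (LinearMap.toSpanSingleton ℂ _ b))
      (l • LinearMap.snd ℂ (Fin 2 → ℂ) ℂ)) ∘ₗ E.symm.toLinearMap)

lemma simMat_mulVec (E : ((Fin 2 → ℂ) × ℂ) ≃ₗ[ℂ] V3) (U : Matrix (Fin 2) (Fin 2) ℂ)
    (b : Fin 2 → ℂ) (l : ℂ) (x : Fin 2 → ℂ) (t : ℂ) :
    simMat E U b l *ᵥ E (x, t) = E (U *ᵥ x + t • b, l * t) := by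
  rw [simMat, LinearMap.toMatrix'_mulVec]
  simp

lemma matrix_ext_E (E : ((Fin 2 → ℂ) × ℂ) ≃ₗ[ℂ] V3) {M N : Matrix (Fin 3) (Fin 3) ℂ}
    (h : ∀ x t, M *ᵥ E (x, t) = N *ᵥ E (x, t)) : M = N := by
  refine Matrix.ext_of_mulVec_single fun i => ?_
  have := h (E.symm (Pi.single i 1)).1 (E.symm (Pi.single i 1)).2
  simpa using this

lemma simMat_mul (E : ((Fin 2 → ℂ) × ℂ) ≃ₗ[ℂ] V3) (U U' : Matrix (Fin 2) (Fin 2) ℂ)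
    (b b' : Fin 2 → ℂ) (l l' : ℂ) : simMat E U b l * simMat E U' b' l' =
      simMat E (U * U') (U *ᵥ b' + l' • b) (l * l') := by
  refine matrix_ext_E E fun x t => ?_
  rw [← Matrix.mulVec_mulVec, simMat_mulVec, simMat_mulVec, simMat_mulVec]
  congr 2
  · rw [Matrix.mulVec_add, Matrix.mulVec_mulVec, Matrix.mulVec_smul, smul_add, smul_smul,
      mul_comm l' t, add_assoc]
  · ring

lemma simMat_one (E : ((Fin 2 → ℂ) × ℂ) ≃ₗ[ℂ] V3) : simMat E 1 0 1 = 1 := by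
  refine matrix_ext_E E fun x t => ?_
  rw [simMat_mulVec]
  simp

lemma simMat_smul (E : ((Fin 2 → ℂ) × ℂ) ≃ₗ[ℂ] V3) (U : Matrix (Fin 2) (Fin 2) ℂ)
    (b : Fin 2 → ℂ) (l r : ℂ) : r • simMat E U b l = simMat E (r • U) (r • b) (r * l) := by
  refine matrix_ext_E E fun x t => ?_
  rw [Matrix.smul_mulVec, simMat_mulVec, simMat_mulVec, ← map_smul, Prod.smul_mk,
    Matrix.smul_mulVec, smul_add, smul_comm r t b, smul_eq_mul, mul_assoc]

lemma simMat_mul_inv (E : ((Fin 2 → ℂ) × ℂ) ≃ₗ[ℂ] V3) {U : Matrix (Fin 2) (Fin 2) ℂ}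
    (hU : U ∈ Matrix.unitaryGroup (Fin 2) ℂ) (b : Fin 2 → ℂ) {l : ℂ} (hl : l ≠ 0) :
    simMat E U b l * simMat E (star U) (-(l⁻¹ • (star U *ᵥ b))) l⁻¹ = 1 := by
  rw [simMat_mul, ← simMat_one E]
  congr 1
  · exact Matrix.mem_unitaryGroup_iff.mp hU
  · rw [Matrix.mulVec_neg, Matrix.mulVec_smul, Matrix.mulVec_mulVec,
      Matrix.mem_unitaryGroup_iff.mp hU, Matrix.one_mulVec, neg_add_cancel]
  · exact mul_inv_cancel₀ hl

lemma det_simMat_ne_zero (E : ((Fin 2 → ℂ) × ℂ) ≃ₗ[ℂ] V3) {U : Matrix (Fin 2) (Fin 2) ℂ}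
    (hU : U ∈ Matrix.unitaryGroup (Fin 2) ℂ) (b : Fin 2 → ℂ) {l : ℂ} (hl : l ≠ 0) :
    (simMat E U b l).det ≠ 0 := by
  have := congrArg Matrix.det (simMat_mul_inv E hU b hl)
  rw [Matrix.det_mul, Matrix.det_one] at this
  exact left_ne_zero_of_mul_eq_one this

lemma continuous_simMat (E : ((Fin 2 → ℂ) × ℂ) ≃ₗ[ℂ] V3) :
    Continuous fun q : Matrix (Fin 2) (Fin 2) ℂ × (Fin 2 → ℂ) × ℂ =>
      simMat E q.1 q.2.1 q.2.2 := by
  have hE : Continuous E := LinearMap.continuous_of_finiteDimensional E.toLinearMap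
  refine continuous_pi fun i => continuous_pi fun j => ?_
  have : ∀ q : Matrix (Fin 2) (Fin 2) ℂ × (Fin 2 → ℂ) × ℂ, simMat E q.1 q.2.1 q.2.2 i j =
      E (q.1 *ᵥ (E.symm (Pi.single j 1)).1 + (E.symm (Pi.single j 1)).2 • q.2.1,
        q.2.2 * (E.symm (Pi.single j 1)).2) i := by
    intro q
    rw [← simMat_mulVec, Prod.mk.eta, LinearEquiv.apply_symm_apply, Matrix.mulVec_single_one]
    rfl
  simp_rw [this]
  refine (continuous_apply i).comp (hE.comp ?_)
  fun_prop

lemma tendsto_simMat (E : ((Fin 2 → ℂ) × ℂ) ≃ₗ[ℂ] V3) {ι : Type*} {F : Filter ι}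
    {U : ι → Matrix (Fin 2) (Fin 2) ℂ} {b : ι → Fin 2 → ℂ} {l : ι → ℂ}
    {U₀ : Matrix (Fin 2) (Fin 2) ℂ} {b₀ : Fin 2 → ℂ} {l₀ : ℂ}
    (hU : Filter.Tendsto U F (𝓝 U₀)) (hb : Filter.Tendsto b F (𝓝 b₀))
    (hl : Filter.Tendsto l F (𝓝 l₀)) :
    Filter.Tendsto (fun i => simMat E (U i) (b i) (l i)) F (𝓝 (simMat E U₀ b₀ l₀)) :=
  Filter.Tendsto.comp (g := fun q : Matrix (Fin 2) (Fin 2) ℂ × (Fin 2 → ℂ) × ℂ =>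
    simMat E q.1 q.2.1 q.2.2) (f := fun i => (U i, b i, l i))
    ((continuous_simMat E).tendsto (U₀, b₀, l₀)) (hU.prodMk_nhds (hb.prodMk_nhds hl))

/-- The elements of `Γ` are similarities in the coordinates `E`. -/
def SimGroup (E : ((Fin 2 → ℂ) × ℂ) ≃ₗ[ℂ] V3) (Γ : Subgroup PSL3) : Prop :=
  ∀ γ ∈ Γ, ∃ U ∈ Matrix.unitaryGroup (Fin 2) ℂ, ∃ b : Fin 2 → ℂ, ∃ l : ℂ, l ≠ 0 ∧
    Represents (simMat E U b l) γ

/-- Translation of the origin of the affine chart to `x₀`. -/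
def shear (x₀ : Fin 2 → ℂ) : ((Fin 2 → ℂ) × ℂ) ≃ₗ[ℂ] ((Fin 2 → ℂ) × ℂ) where
  toFun p := (p.1 + p.2 • x₀, p.2)
  invFun p := (p.1 - p.2 • x₀, p.2)
  map_add' p q := by
    ext1
    · simp only [Prod.fst_add, Prod.snd_add, add_smul]; abel
    · rfl
  map_smul' r p := by
    ext1
    · simp [smul_smul]
    · rfl
  left_inv p := by simp
  right_inv p := by simp

lemma simMat_shear (E : ((Fin 2 → ℂ) × ℂ) ≃ₗ[ℂ] V3) (x₀ : Fin 2 → ℂ)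
    (U : Matrix (Fin 2) (Fin 2) ℂ) (b : Fin 2 → ℂ) (l : ℂ) :
    simMat E U b l = simMat ((shear x₀).trans E) U (b + U *ᵥ x₀ - l • x₀) l := by
  refine matrix_ext_E ((shear x₀).trans E) fun x t => ?_
  rw [simMat_mulVec]
  simp only [LinearEquiv.trans_apply, shear, LinearEquiv.coe_mk, LinearMap.coe_mk, AddHom.coe_mk]
  rw [simMat_mulVec]
  congr 2
  rw [Matrix.mulVec_add, Matrix.mulVec_smul, smul_sub, smul_add, smul_smul, mul_comm l t]
  abel

/-- A similarity whose ratio is not `1` has a fixed point in the affine chart. -/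
lemma exists_fixed {U : Matrix (Fin 2) (Fin 2) ℂ} (hU : U ∈ Matrix.unitaryGroup (Fin 2) ℂ)
    {l : ℂ} (hl : ‖l‖ ≠ 1) (b : Fin 2 → ℂ) : ∃ x₀ : Fin 2 → ℂ, b + U *ᵥ x₀ - l • x₀ = 0 := by
  let T : (Fin 2 → ℂ) →ₗ[ℂ] (Fin 2 → ℂ) := l • LinearMap.id - U.mulVecLin
  have hT : Function.Injective T := by
    rw [← LinearMap.ker_eq_bot, LinearMap.ker_eq_bot']
    intro x hx
    have hx' : U *ᵥ x = l • x := by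
      have : l • x - U *ᵥ x = 0 := hx
      exact (sub_eq_zero.mp this).symm
    -- `U` preserves the Hermitian form, so `|l|² ⟨x, x⟩ = ⟨x, x⟩`
    have h1 : star (U *ᵥ x) ⬝ᵥ (U *ᵥ x) = star x ⬝ᵥ x := by
      have := Matrix.mem_unitaryGroup_iff'.mp hU
      rw [Matrix.star_eq_conjTranspose] at this
      rw [Matrix.star_mulVec, Matrix.dotProduct_mulVec, Matrix.vecMul_vecMul, this,
        Matrix.vecMul_one]
    rw [hx', star_smul, smul_dotProduct, dotProduct_smul, smul_smul, smul_eq_mul] at h1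
    have h2 : star l * l ≠ 1 := by
      intro h
      apply hl
      have h3 := congrArg norm h
      rw [norm_mul, norm_star, norm_one] at h3
      nlinarith [norm_nonneg l]
    have h4 : star x ⬝ᵥ x = 0 := by
      have : (star l * l - 1) * (star x ⬝ᵥ x) = 0 := by linear_combination h1
      exact (mul_eq_zero.mp this).resolve_left (sub_ne_zero.mpr h2)
    open scoped ComplexOrder in
    exact dotProduct_star_self_eq_zero.mp h4
  obtain ⟨x₀, hx₀⟩ := LinearMap.injective_iff_surjective.mp hT b
  refine ⟨x₀, ?_⟩
  have : l • x₀ - U *ᵥ x₀ = b := hx₀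
  rw [← this]
  abel

/-- In a discrete group of similarities containing a contraction `γ₀` with fixed point the origin,
every element fixes the origin: the conjugates `γ₀ⁿ g γ₀⁻ⁿ` accumulate at a similarity fixing the
origin, hence are constant along an ultrafilter. -/
lemma translation_eq_zero (E : ((Fin 2 → ℂ) × ℂ) ≃ₗ[ℂ] V3) (Γ : Subgroup PSL3)
    (hΓ : DiscreteTopology ↥Γ) {γ₀ : PSL3} (hγ₀ : γ₀ ∈ Γ) {U₀ : Matrix (Fin 2) (Fin 2) ℂ}
    (hU₀ : U₀ ∈ Matrix.unitaryGroup (Fin 2) ℂ) {l₀ : ℂ} (hl₀ : 1 < ‖l₀‖)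
    (hrep₀ : Represents (simMat E U₀ 0 l₀) γ₀)
    {g : PSL3} (hg : g ∈ Γ) {U : Matrix (Fin 2) (Fin 2) ℂ}
    (hU : U ∈ Matrix.unitaryGroup (Fin 2) ℂ) {b : Fin 2 → ℂ} {l : ℂ} (hl : l ≠ 0)
    (hrep : Represents (simMat E U b l) g) : b = 0 := by
  have hl₀0 : l₀ ≠ 0 := by
    rintro rfl
    simp at hl₀
    linarith
  have hrep₀' : Represents (simMat E (star U₀) 0 l₀⁻¹) γ₀⁻¹ := by
    refine hrep₀.inv ?_
    have := simMat_mul_inv E hU₀ 0 hl₀0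
    simpa using this
  have hstar : star U₀ ∈ Matrix.unitaryGroup (Fin 2) ℂ := Unitary.star_mem hU₀
  have hpow : ∀ n : ℕ, Represents (simMat E (U₀ ^ n * U * star U₀ ^ n)
      (l₀⁻¹ ^ n • (U₀ ^ n *ᵥ b)) l) (γ₀ ^ n * g * γ₀⁻¹ ^ n) := by
    intro n
    induction n with
    | zero => simpa using hrep
    | succ n ih =>
      have h1 := (hrep₀.mul ih).mul hrep₀'
      rw [simMat_mul, simMat_mul] at h1
      convert h1 using 1
      · congr 1
        · rw [pow_succ', pow_succ]
          simp only [mul_assoc]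
        · rw [Matrix.mulVec_zero, zero_add, smul_zero, add_zero, Matrix.mulVec_smul,
            Matrix.mulVec_mulVec, smul_smul, pow_succ' U₀, pow_succ' l₀⁻¹]
        · field_simp
      · rw [pow_succ', pow_succ]
        simp only [mul_assoc]
  have hn : ∀ n : ℕ, U₀ ^ n ∈ Matrix.unitaryGroup (Fin 2) ℂ := fun n => pow_mem hU₀ n
  obtain ⟨V, -, hV⟩ := exists_tendsto_unitary (Filter.hyperfilter ℕ) hn
  obtain ⟨V', hV'mem, hV'⟩ := exists_tendsto_unitary (Filter.hyperfilter ℕ)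
    (fun n : ℕ => mul_mem (mul_mem (hn n) hU) (pow_mem hstar n))
  have hpow0 : Filter.Tendsto (fun n : ℕ => l₀⁻¹ ^ n) (Filter.hyperfilter ℕ) (𝓝 0) := by
    refine (tendsto_pow_atTop_nhds_zero_of_norm_lt_one ?_).mono_left Nat.hyperfilter_le_atTop
    rw [norm_inv]
    exact inv_lt_one_of_one_lt₀ hl₀
  have hb : Filter.Tendsto (fun n : ℕ => l₀⁻¹ ^ n • (U₀ ^ n *ᵥ b)) (Filter.hyperfilter ℕ)
      (𝓝 0) := by
    have h1 : Filter.Tendsto (fun n : ℕ => U₀ ^ n *ᵥ b) (Filter.hyperfilter ℕ) (𝓝 (V *ᵥ b)) :=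
      ((by fun_prop : Continuous fun M : Matrix (Fin 2) (Fin 2) ℂ => M *ᵥ b).tendsto V).comp hV
    simpa using hpow0.smul h1
  have hlim := tendsto_simMat E hV' hb (tendsto_const_nhds (x := l))
  obtain ⟨h, hh⟩ := discrete_eventually_const' Γ hΓ hlim (det_simMat_ne_zero E hV'mem 0 hl)
    (g := fun n => γ₀ ^ n * g * γ₀⁻¹ ^ n)
    (fun n => Γ.mul_mem (Γ.mul_mem (Γ.pow_mem hγ₀ n) hg) (Γ.pow_mem (Γ.inv_mem hγ₀) n)) hpow
  -- evaluate at the origin `p = [0 : 1]` of the affine chart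
  have hE : ∀ y : Fin 2 → ℂ, ∀ s : ℂ, s ≠ 0 → E (y, s) ≠ 0 := by
    intro y s hs h0
    rw [E.map_eq_zero_iff] at h0
    exact hs (congrArg Prod.snd h0)
  have hpt : ∀ n : ℕ, pact (γ₀ ^ n * g * γ₀⁻¹ ^ n)
      (Projectivization.mk ℂ (E (0, 1)) (hE _ _ one_ne_zero)) =
      Projectivization.mk ℂ (E (l₀⁻¹ ^ n • (U₀ ^ n *ᵥ b), l)) (hE _ _ hl) := by
    intro n
    rw [(hpow n).pact_mk _ ((hpow n).mulVec_ne_zero (hE _ _ one_ne_zero))]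
    refine mk_congr ?_ _ _
    rw [simMat_mulVec]
    simp
  have hcontE : Continuous E := LinearMap.continuous_of_finiteDimensional E.toLinearMap
  have hlim2 : Filter.Tendsto (fun n : ℕ => pact (γ₀ ^ n * g * γ₀⁻¹ ^ n)
      (Projectivization.mk ℂ (E (0, 1)) (hE _ _ one_ne_zero))) (Filter.hyperfilter ℕ)
      (𝓝 (Projectivization.mk ℂ (E (0, l)) (hE _ _ hl))) := by
    simp_rw [hpt]
    exact tendsto_mk ((hcontE.tendsto (0, l)).comp (hb.prodMk_nhds tendsto_const_nhds)) _ _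
  have hlim3 : Filter.Tendsto (fun n : ℕ => pact (γ₀ ^ n * g * γ₀⁻¹ ^ n)
      (Projectivization.mk ℂ (E (0, 1)) (hE _ _ one_ne_zero))) (Filter.hyperfilter ℕ)
      (𝓝 (pact h (Projectivization.mk ℂ (E (0, 1)) (hE _ _ one_ne_zero)))) := by
    refine tendsto_const_nhds.congr' ?_
    filter_upwards [hh] with n hn
    rw [hn]
  have heq := tendsto_nhds_unique hlim2 hlim3
  obtain ⟨n, hn'⟩ := hh.exists
  rw [← hn', hpt n, mk_eq_mk_iff'] at heq
  obtain ⟨a, ha⟩ := heq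
  rw [← map_smul] at ha
  have ha' := E.injective ha
  have ha2 : a * l = l := congrArg Prod.snd ha'
  have ha1 : a • (l₀⁻¹ ^ n • (U₀ ^ n *ᵥ b)) = 0 := congrArg Prod.fst ha'
  have ha0 : a ≠ 0 := by
    rintro rfl
    rw [zero_mul] at ha2
    exact hl ha2.symm
  rw [smul_eq_zero_iff_right ha0, smul_eq_zero_iff_right (pow_ne_zero _ (inv_ne_zero hl₀0))] at ha1
  exact unitary_mulVec_inj (hn n) (by rw [ha1, Matrix.mulVec_zero])

/-! ### Failure of normality along the line at infinity -/

/-- If the vectors `(b, l)` occurring in `Γ` are unbounded, then no point of the line at infinity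
`t = 0` is in the equicontinuity set. Off this line a sequence with `‖(b, l)‖ → ∞` tends to a
constant `[q]`, by continuity a limit in `C(O, ℙ²)` is then constant on `O`, whereas on the line it
is given by a limit of the unitary parts, which is injective. -/
lemma notMem_eqSet (E : ((Fin 2 → ℂ) × ℂ) ≃ₗ[ℂ] V3) (Γ : Subgroup PSL3)
    (hunb : ∀ R : ℝ, ∃ γ ∈ Γ, ∃ U ∈ Matrix.unitaryGroup (Fin 2) ℂ, ∃ b : Fin 2 → ℂ, ∃ l : ℂ,
      Represents (simMat E U b l) γ ∧ R < ‖(b, l)‖)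
    {x : Fin 2 → ℂ} (hx : x ≠ 0) (hEx : E (x, 0) ≠ 0) :
    (Projectivization.mk ℂ (E (x, 0)) hEx : P2) ∉ eqSet Γ := by
  rintro ⟨O, hO, hz, hK⟩
  choose γ hγ U hU b l hrep hR using fun n : ℕ => hunb n
  have hcontE : Continuous E := LinearMap.continuous_of_finiteDimensional E.toLinearMap
  have hEne : ∀ p : (Fin 2 → ℂ) × ℂ, p ≠ 0 → E p ≠ 0 := fun p hp => by
    rwa [Ne, E.map_eq_zero_iff]
  have hfst : ∀ {y : Fin 2 → ℂ} (s : ℂ), y ≠ 0 → E (y, s) ≠ 0 := fun s hy =>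
    hEne _ fun h => hy (congrArg Prod.fst h)
  let F := Filter.hyperfilter ℕ
  obtain ⟨U₀, hU₀, hUlim⟩ := exists_tendsto_unitary F hU
  have hm : ∀ n, 0 < ‖(b n, l n)‖ := fun n => lt_of_le_of_lt (Nat.cast_nonneg n) (hR n)
  let r : ℕ → ℂ := fun n => ((‖(b n, l n)‖⁻¹ : ℝ) : ℂ)
  have hr0 : ∀ n, r n ≠ 0 := fun n => Complex.ofReal_ne_zero.mpr (inv_ne_zero (hm n).ne')
  have hrlim : Filter.Tendsto r F (𝓝 0) := by
    have h1 : Filter.Tendsto (fun n => ‖(b n, l n)‖) Filter.atTop Filter.atTop :=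
      Filter.tendsto_atTop_mono (fun n => (hR n).le) tendsto_natCast_atTop_atTop
    have h2 := (Complex.continuous_ofReal.tendsto 0).comp (tendsto_inv_atTop_zero.comp h1)
    rw [Complex.ofReal_zero] at h2
    exact h2.mono_left Nat.hyperfilter_le_atTop
  obtain ⟨q, hq, hqlim⟩ : ∃ q ∈ Metric.sphere (0 : (Fin 2 → ℂ) × ℂ) 1,
      Filter.Tendsto (fun n => r n • (b n, l n)) F (𝓝 q) := by
    refine (isCompact_sphere (0 : (Fin 2 → ℂ) × ℂ) 1).ultrafilter_le_nhds
      (F.map fun n => r n • (b n, l n))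
      (Filter.le_principal_iff.mpr (Filter.mem_map.mpr (Filter.Eventually.of_forall fun n => ?_)))
    rw [mem_sphere_zero_iff_norm, norm_smul, Complex.norm_real, norm_inv, norm_norm]
    exact inv_mul_cancel₀ (hm n).ne'
  have hq0 : q ≠ 0 := by
    rintro rfl
    simp at hq
  obtain ⟨f, -, hf⟩ := hK.ultrafilter_le_nhds (F.map fun n => (pactCM (γ n)).restrict O)
    (Filter.le_principal_iff.mpr (Filter.mem_map.mpr (Filter.Eventually.of_forall fun n =>
      subset_closure ⟨γ n, hγ n, rfl⟩)))
  have hf' : Filter.Tendsto (fun n => (pactCM (γ n)).restrict O) F (𝓝 f) := hf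
  have heval : ∀ p : O, Filter.Tendsto (fun n => pact (γ n) p) F (𝓝 (f p)) := fun p =>
    ((continuous_eval_const (F := C(O, P2)) p).tendsto f).comp hf'
  have hlimit : ∀ (M : ℕ → Matrix (Fin 3) (Fin 3) ℂ) (v w : V3) (hv : v ≠ 0) (hw : w ≠ 0)
      (hO : (Projectivization.mk ℂ v hv : P2) ∈ O), (∀ n, Represents (M n) (γ n)) →
      Filter.Tendsto (fun n => M n *ᵥ v) F (𝓝 w) → f ⟨_, hO⟩ = Projectivization.mk ℂ w hw := by
    intro M v w hv hw hO hM hlim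
    refine tendsto_nhds_unique (heval ⟨_, hO⟩) ?_
    refine (tendsto_mk hlim (fun n => (hM n).mulVec_ne_zero hv) hw).congr fun n => ?_
    exact ((hM n).pact_mk hv _).symm
  have hoff : ∀ (y : Fin 2 → ℂ) (t : ℂ) (hne : E (y, t) ≠ 0) (_ : t ≠ 0)
      (hO : (Projectivization.mk ℂ (E (y, t)) hne : P2) ∈ O),
      f ⟨_, hO⟩ = Projectivization.mk ℂ (E q) (hEne q hq0) := by
    intro y t hne ht hO
    have h1 : E (t • q) ≠ 0 := hEne _ (smul_ne_zero ht hq0)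
    rw [hlimit (fun n => simMat E (r n • U n) (r n • b n) (r n * l n)) _ (E (t • q)) hne h1 hO
      (fun n => by rw [← simMat_smul]; exact (hrep n).smul (hr0 n)) ?_]
    · exact mk_smul_eq (map_smul E t q) _ _
    · have h2 : E (t • q) = simMat E 0 q.1 q.2 *ᵥ E (y, t) := by
        rw [simMat_mulVec, Matrix.zero_mulVec, zero_add, mul_comm]
        rfl
      rw [h2]
      have h3 : Filter.Tendsto (fun n => r n • U n) F (𝓝 0) := by
        simpa using hrlim.smul hUlim
      have h4 := tendsto_simMat E h3 ((continuous_fst.tendsto q).comp hqlim)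
        ((continuous_snd.tendsto q).comp hqlim)
      exact ((by fun_prop : Continuous fun M : Matrix (Fin 3) (Fin 3) ℂ => M *ᵥ E (y, t)).tendsto
        _).comp h4
  have hon : ∀ (y : Fin 2 → ℂ) (hne : E (y, 0) ≠ 0) (hne' : E (U₀ *ᵥ y, 0) ≠ 0)
      (hO : (Projectivization.mk ℂ (E (y, 0)) hne : P2) ∈ O),
      f ⟨_, hO⟩ = Projectivization.mk ℂ (E (U₀ *ᵥ y, 0)) hne' := by
    intro y hne hne' hO
    refine hlimit _ _ _ hne hne' hO hrep ?_
    have h1 : Continuous fun M : Matrix (Fin 2) (Fin 2) ℂ =>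
        E (M *ᵥ y, 0) := hcontE.comp (by fun_prop)
    refine ((h1.tendsto U₀).comp hUlim).congr fun n => ?_
    rw [Function.comp_apply, simMat_mulVec, zero_smul, add_zero, mul_zero]
  -- points of the line are limits of points off the line
  have hon' : ∀ (y : Fin 2 → ℂ) (hy : y ≠ 0) (hne : E (y, 0) ≠ 0)
      (hO : (Projectivization.mk ℂ (E (y, 0)) hne : P2) ∈ O),
      f ⟨_, hO⟩ = Projectivization.mk ℂ (E q) (hEne q hq0) := by
    intro y hy hne hyO
    have hlim : Filter.Tendsto (fun t : ℂ => (Projectivization.mk ℂ (E (y, t)) (hfst t hy) : P2))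
        (𝓝[≠] 0) (𝓝 (Projectivization.mk ℂ (E (y, 0)) hne)) := by
      refine tendsto_mk ?_ _ _
      exact ((hcontE.comp (by fun_prop : Continuous fun t : ℂ => (y, t))).tendsto 0).mono_left
        nhdsWithin_le_nhds
    have hev := (hlim.eventually (hO.mem_nhds hyO)).and self_mem_nhdsWithin
    obtain ⟨u, hu, hmem⟩ := Filter.exists_seq_forall_of_frequently hev.frequently
    have h1 : Filter.Tendsto (fun k => (⟨_, (hmem k).1⟩ : O)) Filter.atTop (𝓝 ⟨_, hyO⟩) :=
      tendsto_subtype_rng.mpr (hlim.comp hu)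
    have h2 := (f.continuous.tendsto _).comp h1
    refine tendsto_nhds_unique h2 (tendsto_const_nhds.congr fun k => ?_)
    exact (hoff y (u k) _ (hmem k).2 (hmem k).1).symm
  obtain ⟨x₁, hx₁⟩ : ∃ x₁ : Fin 2 → ℂ, x₁ ∉ Submodule.span ℂ {x} := by
    by_contra! h
    have h1 : Submodule.span ℂ {x} = ⊤ := Submodule.eq_top_iff'.mpr h
    have h2 := finrank_span_singleton (K := ℂ) hx
    rw [h1, finrank_top, Module.finrank_fin_fun] at h2
    norm_num at h2
  have hindep : ∀ (ε a : ℂ), x + ε • x₁ = a • x → ε = 0 := by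
    intro ε a h
    by_contra hε
    refine hx₁ (Submodule.mem_span_singleton.mpr ⟨ε⁻¹ * (a - 1), ?_⟩)
    rw [mul_smul, sub_smul, ← h, one_smul, add_sub_cancel_left, smul_smul, inv_mul_cancel₀ hε,
      one_smul]
  have hne1 : ∀ ε : ℂ, x + ε • x₁ ≠ 0 := by
    intro ε h
    have := hindep ε 0 (by rw [h, zero_smul])
    rw [this, zero_smul, add_zero] at h
    exact hx h
  have hlim : Filter.Tendsto
      (fun ε : ℂ => (Projectivization.mk ℂ (E (x + ε • x₁, 0)) (hfst 0 (hne1 ε)) : P2))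
      (𝓝[≠] 0) (𝓝 (Projectivization.mk ℂ (E (x, 0)) hEx)) := by
    refine tendsto_mk ?_ _ _
    have h1 := ((hcontE.comp (by fun_prop : Continuous fun ε : ℂ =>
      ((x + ε • x₁, 0) : (Fin 2 → ℂ) × ℂ))).tendsto 0).mono_left
        (nhdsWithin_le_nhds (s := {0}ᶜ))
    simpa only [Function.comp_def, zero_smul, add_zero] using h1
  obtain ⟨ε, hεO, hε⟩ := ((hlim.eventually (hO.mem_nhds hz)).and self_mem_nhdsWithin).exists
  have hUne : ∀ y : Fin 2 → ℂ, y ≠ 0 → E (U₀ *ᵥ y, 0) ≠ 0 := fun y hy => hfst 0 fun h =>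
    hy (unitary_mulVec_inj hU₀ (by rw [h, Matrix.mulVec_zero]))
  have e1 := (hon x hEx (hUne x hx) hz).symm.trans (hon' x hx hEx hz)
  have e2 := (hon _ _ (hUne _ (hne1 ε)) hεO).symm.trans (hon' _ (hne1 ε) _ hεO)
  have e3 := e2.trans e1.symm
  rw [mk_eq_mk_iff'] at e3
  obtain ⟨a, ha⟩ := e3
  rw [← map_smul] at ha
  have ha1 : a • (U₀ *ᵥ x) = U₀ *ᵥ (x + ε • x₁) := congrArg Prod.fst (E.injective ha)
  rw [← Matrix.mulVec_smul] at ha1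
  exact hε (hindep ε a (unitary_mulVec_inj hU₀ ha1).symm)

/-! ### Normality off the line -/

/-- Normality criterion in coordinates. The similarities `(U, b, l)` of `Γ` are rescaled to
`(s U, c, μ)` with `max s ‖(c, μ)‖ = 1`; `Q` is a closed condition on `(s, U, c, μ)` satisfied by
all rescalings. -/
lemma mem_eqSet_of_closed (E : ((Fin 2 → ℂ) × ℂ) ≃ₗ[ℂ] V3) (Γ : Subgroup PSL3)
    {Q : Set (ℝ × Matrix (Fin 2) (Fin 2) ℂ × (Fin 2 → ℂ) × ℂ)} (hQ : IsClosed Q)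
    (hΓ : ∀ γ ∈ Γ, ∃ U ∈ Matrix.unitaryGroup (Fin 2) ℂ, ∃ b : Fin 2 → ℂ, ∃ l : ℂ,
      Represents (simMat E U b l) γ ∧ ∀ r : ℝ, 0 < r → (r, U, (r : ℂ) • b, (r : ℂ) * l) ∈ Q)
    {x : Fin 2 → ℂ} {t : ℂ} (hne : E (x, t) ≠ 0)
    (hxt : ∀ s : ℝ, ∀ U ∈ Matrix.unitaryGroup (Fin 2) ℂ, ∀ (c : Fin 2 → ℂ) (μ : ℂ),
      (s, U, c, μ) ∈ Q → 0 ≤ s → max s ‖(c, μ)‖ = 1 →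
      ((s : ℂ) • U) *ᵥ x + t • c = 0 → μ * t = 0 → False) :
    (Projectivization.mk ℂ (E (x, t)) hne : P2) ∈ eqSet Γ := by
  let K : Set (ℝ × Matrix (Fin 2) (Fin 2) ℂ × (Fin 2 → ℂ) × ℂ) :=
    (Set.Icc 0 1 ×ˢ (Matrix.unitaryGroup (Fin 2) ℂ : Set (Matrix (Fin 2) (Fin 2) ℂ)) ×ˢ
      Metric.closedBall (0 : (Fin 2 → ℂ) × ℂ) 1) ∩ ({q | max q.1 ‖q.2.2‖ = 1} ∩ Q)
  have hK : IsCompact K := by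
    refine (isCompact_Icc.prod (isCompact_unitaryGroup.prod
      (isCompact_closedBall _ _))).inter_right (IsClosed.inter ?_ hQ)
    exact isClosed_eq (by fun_prop) continuous_const
  let Φ : ℝ × Matrix (Fin 2) (Fin 2) ℂ × (Fin 2 → ℂ) × ℂ → Matrix (Fin 3) (Fin 3) ℂ :=
    fun q => simMat E ((q.1 : ℂ) • q.2.1) q.2.2.1 q.2.2.2
  have hcont : Continuous Φ :=
    Continuous.comp (g := fun q : Matrix (Fin 2) (Fin 2) ℂ × (Fin 2 → ℂ) × ℂ =>
        simMat E q.1 q.2.1 q.2.2)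
      (f := fun q : ℝ × Matrix (Fin 2) (Fin 2) ℂ × (Fin 2 → ℂ) × ℂ =>
        ((q.1 : ℂ) • q.2.1, q.2.2.1, q.2.2.2)) (continuous_simMat E) (by fun_prop)
  refine mem_eqSet_of_compact Γ (hK.image hcont) ?_ hne ?_
  · intro γ hγ
    obtain ⟨U, hU, b, l, hrep, hr⟩ := hΓ γ hγ
    have hm : 0 < max 1 ‖(b, l)‖ := lt_max_of_lt_left one_pos
    set r : ℝ := (max 1 ‖(b, l)‖)⁻¹ with hrdef
    have hr0 : 0 < r := inv_pos.mpr hm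
    have hnorm : ‖((r : ℂ) • b, (r : ℂ) * l)‖ = r * ‖(b, l)‖ := by
      have : ((r : ℂ) • b, (r : ℂ) * l) = (r : ℂ) • (b, l) := rfl
      rw [this, norm_smul, Complex.norm_real, Real.norm_of_nonneg hr0.le]
    have hmax : max r ‖((r : ℂ) • b, (r : ℂ) * l)‖ = 1 := by
      rw [hnorm]
      nth_rewrite 1 [← mul_one r]
      rw [← mul_max_of_nonneg _ _ hr0.le, hrdef, inv_mul_cancel₀ hm.ne']
    have hr1 : r ≤ 1 := hmax ▸ le_max_left _ _
    have hr2 : ((r : ℂ) • b, (r : ℂ) * l) ∈ Metric.closedBall (0 : (Fin 2 → ℂ) × ℂ) 1 :=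
      mem_closedBall_zero_iff.mpr (hmax ▸ le_max_right _ _)
    have hmem : (r, U, (r : ℂ) • b, (r : ℂ) * l) ∈ K :=
      Set.mem_inter (Set.mk_mem_prod ⟨hr0.le, hr1⟩ (Set.mk_mem_prod hU hr2)) ⟨hmax, hr r hr0⟩
    refine ⟨Φ (r, U, (r : ℂ) • b, (r : ℂ) * l), Set.mem_image_of_mem Φ hmem, ?_⟩
    have h5 := hrep.smul (Complex.ofReal_ne_zero.mpr hr0.ne')
    rw [simMat_smul] at h5
    exact h5
  · rintro M ⟨q, hqK, hM⟩ h0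
    obtain ⟨s, U, c, μ⟩ := q
    obtain ⟨⟨hs, hU, -⟩, hmax, hq⟩ := hqK
    rw [← hM] at h0
    change simMat E ((s : ℂ) • U) c μ *ᵥ E (x, t) = 0 at h0
    rw [simMat_mulVec, E.map_eq_zero_iff] at h0
    exact hxt s U hU c μ hq hs.1 hmax (congrArg Prod.fst h0) (congrArg Prod.snd h0)

/-- The description of the equicontinuity set in suitable coordinates: it misses the line `t = 0`,
and it contains every point off this line except possibly the origin of the affine chart. -/
def GoodCoords (E : ((Fin 2 → ℂ) × ℂ) ≃ₗ[ℂ] V3) (Γ : Subgroup PSL3) : Prop :=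
  (∀ (x : Fin 2 → ℂ) (t : ℂ) (hne : E (x, t) ≠ 0), x ≠ 0 → t ≠ 0 →
    (Projectivization.mk ℂ (E (x, t)) hne : P2) ∈ eqSet Γ) ∧
  (∀ (x : Fin 2 → ℂ) (hne : E (x, 0) ≠ 0), (Projectivization.mk ℂ (E (x, 0)) hne : P2) ∉ eqSet Γ)

/-- A discrete infinite group of similarities of ratio `1`: the translation parts are unbounded. -/
lemma goodCoords_of_isometry (E : ((Fin 2 → ℂ) × ℂ) ≃ₗ[ℂ] V3) (Γ : Subgroup PSL3)
    (hΓ : DiscreteTopology ↥Γ) (hinf : Infinite Γ)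
    (hiso : ∀ γ ∈ Γ, ∃ U ∈ Matrix.unitaryGroup (Fin 2) ℂ, ∃ b : Fin 2 → ℂ, ∃ l : ℂ, ‖l‖ = 1 ∧
      Represents (simMat E U b l) γ) : GoodCoords E Γ := by
  constructor
  · intro x t hne hx ht
    refine mem_eqSet_of_closed E Γ (Q := {q | ‖q.2.2.2‖ = q.1})
      (isClosed_eq (by fun_prop) (by fun_prop)) ?_ hne ?_
    · intro γ hγ
      obtain ⟨U, hU, b, l, hl, hrep⟩ := hiso γ hγ
      refine ⟨U, hU, b, l, hrep, fun r hr => ?_⟩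
      show ‖(r : ℂ) * l‖ = r
      rw [norm_mul, hl, mul_one, Complex.norm_real, Real.norm_of_nonneg hr.le]
    · intro s U hU c μ hq hs hmax h1 h2
      have hμ : μ = 0 := (mul_eq_zero.mp h2).resolve_right ht
      have hs0 : s = 0 := by
        have : ‖μ‖ = s := hq
        rw [← this, hμ, norm_zero]
      have hc : c = 0 := by
        rw [hs0, Complex.ofReal_zero, zero_smul, Matrix.zero_mulVec, zero_add] at h1
        exact (smul_eq_zero_iff_right ht).mp h1
      rw [hs0, hc, hμ] at hmax
      simp at hmax
  · intro x hne
    have hx : x ≠ 0 := by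
      rintro rfl
      exact hne (by rw [E.map_eq_zero_iff]; rfl)
    refine notMem_eqSet E Γ ?_ hx hne
    by_contra! hbd
    obtain ⟨R, hR⟩ := hbd
    choose! U hU b l hl hrep using hiso
    obtain ⟨U₀, hU₀, hUlim⟩ := exists_tendsto_unitary (Filter.hyperfilter Γ)
      (fun γ : Γ => hU γ.1 γ.2)
    obtain ⟨q, -, hq⟩ := (isCompact_closedBall (0 : (Fin 2 → ℂ) × ℂ) R).ultrafilter_le_nhds
      ((Filter.hyperfilter Γ).map fun γ : Γ => (b γ.1, l γ.1))
      (Filter.le_principal_iff.mpr (Filter.mem_map.mpr (Filter.Eventually.of_forall fun γ => by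
        exact mem_closedBall_zero_iff.mpr
          (hR γ.1 γ.2 (U γ.1) (hU γ.1 γ.2) (b γ.1) (l γ.1) (hrep γ.1 γ.2)))))
    have hq' : Filter.Tendsto (fun γ : Γ => (b γ.1, l γ.1)) (Filter.hyperfilter Γ) (𝓝 q) := hq
    have hb := (continuous_fst.tendsto q).comp hq'
    have hl' := (continuous_snd.tendsto q).comp hq'
    have hq2 : q.2 ≠ 0 := by
      have h1 : ‖q.2‖ = 1 := by
        refine tendsto_nhds_unique hl'.norm (tendsto_const_nhds.congr fun γ => ?_)
        exact (hl γ.1 γ.2).symm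
      rintro h0
      rw [h0, norm_zero] at h1
      exact zero_ne_one h1
    obtain ⟨δ, hδ⟩ := discrete_eventually_const' Γ hΓ (tendsto_simMat E hUlim hb hl')
      (det_simMat_ne_zero E hU₀ _ hq2) (g := fun γ : Γ => γ.1) (fun γ => γ.2)
      (fun γ => hrep γ.1 γ.2)
    -- a set in the hyperfilter is infinite, but at most one element of `Γ` equals `δ`
    refine Filter.notMem_hyperfilter_of_finite (s := {γ : Γ | γ.1 = δ}) ?_ hδ
    refine Set.Subsingleton.finite fun γ₁ h₁ γ₂ h₂ => Subtype.ext ?_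
    exact Eq.trans h₁ (Eq.symm h₂)

/-- A discrete group of similarities containing a contraction fixing the origin. -/
lemma goodCoords_of_contraction (E : ((Fin 2 → ℂ) × ℂ) ≃ₗ[ℂ] V3) (Γ : Subgroup PSL3)
    (hΓ : DiscreteTopology ↥Γ) (hsim : SimGroup E Γ) {γ₀ : PSL3} (hγ₀ : γ₀ ∈ Γ)
    {U₀ : Matrix (Fin 2) (Fin 2) ℂ} (hU₀ : U₀ ∈ Matrix.unitaryGroup (Fin 2) ℂ) {l₀ : ℂ}
    (hl₀ : 1 < ‖l₀‖) (hrep₀ : Represents (simMat E U₀ 0 l₀) γ₀) : GoodCoords E Γ := by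
  constructor
  · intro x t hne hx ht
    refine mem_eqSet_of_closed E Γ (Q := {q | q.2.2.1 = 0})
      (isClosed_eq (by fun_prop) (by fun_prop)) ?_ hne ?_
    · intro γ hγ
      obtain ⟨U, hU, b, l, hl, hrep⟩ := hsim γ hγ
      refine ⟨U, hU, b, l, hrep, fun r hr => ?_⟩
      show (r : ℂ) • b = 0
      rw [translation_eq_zero E Γ hΓ hγ₀ hU₀ hl₀ hrep₀ hγ hU hl hrep, smul_zero]
    · intro s U hU c μ hq hs hmax h1 h2
      have hμ : μ = 0 := (mul_eq_zero.mp h2).resolve_right ht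
      have hc : c = 0 := hq
      have hs1 : s = 1 := by
        rw [hμ, hc] at hmax
        have h3 : ‖((0, 0) : (Fin 2 → ℂ) × ℂ)‖ = 0 := norm_zero
        rwa [h3, max_eq_left hs] at hmax
      rw [hc, hs1, Complex.ofReal_one, one_smul, smul_zero, add_zero] at h1
      exact hx (unitary_mulVec_inj hU (by rw [h1, Matrix.mulVec_zero]))
  · intro x hne
    have hx : x ≠ 0 := by
      rintro rfl
      exact hne (by rw [E.map_eq_zero_iff]; rfl)
    refine notMem_eqSet E Γ (fun R => ?_) hx hne
    obtain ⟨n, hn⟩ := pow_unbounded_of_one_lt R hl₀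
    have hpow : ∀ n : ℕ, Represents (simMat E (U₀ ^ n) 0 (l₀ ^ n)) (γ₀ ^ n) := by
      intro n
      induction n with
      | zero =>
        simp only [pow_zero, simMat_one]
        exact ⟨1, rfl, 1, one_ne_zero, by rw [one_smul]; rfl⟩
      | succ n ih =>
        have h1 := ih.mul hrep₀
        rw [simMat_mul, Matrix.mulVec_zero, smul_zero, zero_add] at h1
        simpa only [pow_succ] using h1
    refine ⟨γ₀ ^ n, Γ.pow_mem hγ₀ n, U₀ ^ n, pow_mem hU₀ n, 0, l₀ ^ n, hpow n, ?_⟩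
    rw [← norm_pow] at hn
    exact hn.trans_le (norm_snd_le ((0, l₀ ^ n) : (Fin 2 → ℂ) × ℂ))

/-- A discrete infinite group of similarities has good coordinates with the same line at
infinity. -/
lemma exists_goodCoords (E : ((Fin 2 → ℂ) × ℂ) ≃ₗ[ℂ] V3) (Γ : Subgroup PSL3)
    (hΓ : DiscreteTopology ↥Γ) (hinf : Infinite Γ) (hsim : SimGroup E Γ) :
    ∃ E' : ((Fin 2 → ℂ) × ℂ) ≃ₗ[ℂ] V3, (∀ v, (E'.symm v).2 = (E.symm v).2) ∧
      GoodCoords E' Γ := by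
  by_cases hiso : ∀ γ ∈ Γ, ∃ U ∈ Matrix.unitaryGroup (Fin 2) ℂ, ∃ b : Fin 2 → ℂ, ∃ l : ℂ,
      ‖l‖ = 1 ∧ Represents (simMat E U b l) γ
  · exact ⟨E, fun v => rfl, goodCoords_of_isometry E Γ hΓ hinf hiso⟩
  · push Not at hiso
    obtain ⟨γ₁, hγ₁, h1⟩ := hiso
    -- some element is a contraction of the chart (`1 < ‖l‖`): `γ₁` or its inverse
    obtain ⟨γ₀, hγ₀, U₀, hU₀, b₀, l₀, hl₀, hrep₀⟩ : ∃ γ₀ ∈ Γ,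
        ∃ U ∈ Matrix.unitaryGroup (Fin 2) ℂ, ∃ b : Fin 2 → ℂ, ∃ l : ℂ,
        1 < ‖l‖ ∧ Represents (simMat E U b l) γ₀ := by
      obtain ⟨U, hU, b, l, hl, hrep⟩ := hsim γ₁ hγ₁
      have hne : ‖l‖ ≠ 1 := fun h => h1 U hU b l h hrep
      rcases lt_or_gt_of_ne hne with h | h
      · refine ⟨γ₁⁻¹, Γ.inv_mem hγ₁, _, Unitary.star_mem hU, _, _, ?_,
          hrep.inv (simMat_mul_inv E hU b hl)⟩
        rw [norm_inv]
        exact (one_lt_inv₀ (norm_pos_iff.mpr hl)).mpr h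
      · exact ⟨γ₁, hγ₁, U, hU, b, l, h, hrep⟩
    obtain ⟨x₀, hx₀⟩ := exists_fixed hU₀ hl₀.ne' b₀
    refine ⟨(shear x₀).trans E, fun v => rfl,
      goodCoords_of_contraction _ Γ hΓ ?_ hγ₀ hU₀ hl₀ ?_⟩
    · intro γ hγ
      obtain ⟨U, hU, b, l, hl, hrep⟩ := hsim γ hγ
      refine ⟨U, hU, b + U *ᵥ x₀ - l • x₀, l, hl, ?_⟩
      rw [simMat_shear E x₀] at hrep
      exact hrep
    · rw [simMat_shear E x₀, hx₀] at hrep₀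
      exact hrep₀

/-! ### The lines in the complement of the equicontinuity set -/

/-- Coordinates adapted to `W`: a complement of the range of `ψ` is spanned by any vector outside
it, and since each `γ` preserves this range acting there as a multiple of a unitary matrix, it is
a similarity in these coordinates. -/
lemma exists_simGroup (Γ : Subgroup PSL3) (W : Submodule ℂ V3) (hW : Module.finrank ℂ W = 2)
    (ψ : (Fin 2 → ℂ) →ₗ[ℂ] V3) (hψ : Function.Injective ψ) (hrange : LinearMap.range ψ = W)
    (hrot : ∀ γ ∈ Γ, ∃ A : SL3, (QuotientGroup.mk A : PSL3) = γ ∧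
      ∃ c : ℂ, c ≠ 0 ∧ ∃ U ∈ Matrix.unitaryGroup (Fin 2) ℂ, ∀ u : Fin 2 → ℂ,
        (A : Matrix (Fin 3) (Fin 3) ℂ).mulVec (ψ u) = ψ (c • U.mulVec u)) :
    ∃ E : ((Fin 2 → ℂ) × ℂ) ≃ₗ[ℂ] V3, (∀ v, v ∈ W ↔ (E.symm v).2 = 0) ∧ SimGroup E Γ := by
  obtain ⟨w, hw⟩ : ∃ w : V3, w ∉ W := by
    by_contra! h
    rw [Submodule.eq_top_iff'.mpr h, finrank_top, Module.finrank_fin_fun] at hW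
    norm_num at hW
  have hψW : ∀ x, ψ x ∈ W := fun x => hrange ▸ LinearMap.mem_range_self ψ x
  have hmem : ∀ (x : Fin 2 → ℂ) (t : ℂ), ψ x + t • w ∈ W → t = 0 := by
    intro x t h
    by_contra ht
    exact hw ((W.smul_mem_iff ht).mp ((W.add_mem_iff_right (hψW x)).mp h))
  let T : ((Fin 2 → ℂ) × ℂ) →ₗ[ℂ] V3 := LinearMap.coprod ψ (LinearMap.toSpanSingleton ℂ V3 w)
  have hT : Function.Injective T := by
    rw [← LinearMap.ker_eq_bot, LinearMap.ker_eq_bot']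
    rintro ⟨x, t⟩ hxt
    have h1 : ψ x + t • w = 0 := hxt
    have ht : t = 0 := hmem x t (h1 ▸ W.zero_mem)
    rw [ht, zero_smul, add_zero] at h1
    have hx : x = 0 := hψ (by rw [h1, map_zero])
    rw [hx, ht]
    rfl
  let E : ((Fin 2 → ℂ) × ℂ) ≃ₗ[ℂ] V3 := LinearEquiv.ofInjectiveOfFinrankEq T hT (by simp)
  have hE : ∀ x t, E (x, t) = ψ x + t • w := fun x t => rfl
  refine ⟨E, fun v => ?_, fun γ hγ => ?_⟩
  · obtain ⟨⟨x, t⟩, rfl⟩ := E.surjective v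
    rw [LinearEquiv.symm_apply_apply, hE]
    refine ⟨hmem x t, fun h => ?_⟩
    have ht : t = 0 := h
    rw [ht, zero_smul, add_zero]
    exact hψW x
  · obtain ⟨A, hA, c, hc, U, hU, hAU⟩ := hrot γ hγ
    obtain ⟨⟨y, s⟩, hys⟩ := E.surjective ((A : Matrix (Fin 3) (Fin 3) ℂ) *ᵥ w)
    have hrep : Represents (simMat E U (c⁻¹ • y) (c⁻¹ * s)) γ := by
      refine ⟨A, hA, c, hc, matrix_ext_E E fun x t => ?_⟩
      rw [Matrix.smul_mulVec, simMat_mulVec, ← map_smul, hE x t, Matrix.mulVec_add,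
        Matrix.mulVec_smul, hAU, ← hys, ← map_smul E t]
      have h2 : ψ (c • U *ᵥ x) = E (c • U *ᵥ x, 0) := by rw [hE, zero_smul, add_zero]
      rw [h2, ← map_add]
      congr 1
      ext1
      · change c • U *ᵥ x + t • y = c • (U *ᵥ x + t • c⁻¹ • y)
        rw [smul_add, smul_comm t, smul_smul c, mul_inv_cancel₀ hc, one_smul]
      · change 0 + t * s = c * (c⁻¹ * s * t)
        field_simp
        ring
    refine ⟨U, hU, c⁻¹ • y, c⁻¹ * s, ?_, hrep⟩
    -- if `l = 0`, then `(-U⁻¹ b, 1)` is in the kernel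
    intro hl
    have hne : E (-(star U *ᵥ (c⁻¹ • y)), 1) ≠ 0 := by
      rw [Ne, E.map_eq_zero_iff]
      exact fun h => one_ne_zero (congrArg Prod.snd h)
    refine hrep.mulVec_ne_zero hne ?_
    rw [simMat_mulVec, E.map_eq_zero_iff, hl, zero_mul, Matrix.mulVec_neg, Matrix.mulVec_mulVec,
      Matrix.mem_unitaryGroup_iff.mp hU, Matrix.one_mulVec, one_smul, neg_add_cancel]
    rfl

/-- With good coordinates, `t = 0` is the only line in the complement of the equicontinuity set. -/
lemma linesIn_compl_eqSet (E : ((Fin 2 → ℂ) × ℂ) ≃ₗ[ℂ] V3) (Γ : Subgroup PSL3)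
    (hE : GoodCoords E Γ) (W : Submodule ℂ V3) (hW : Module.finrank ℂ W = 2)
    (hWE : ∀ v, v ∈ W ↔ (E.symm v).2 = 0) :
    linesIn (eqSet Γ)ᶜ = {{p : P2 | p.submodule ≤ W}} := by
  have hoff : ∀ W' : Submodule ℂ V3, {p : P2 | p.submodule ≤ W'} ⊆ (eqSet Γ)ᶜ →
      ∀ (x : Fin 2 → ℂ) (t : ℂ), x ≠ 0 → t ≠ 0 → E (x, t) ∉ W' := by
    intro W' hW' x t hx ht hmem
    have hne : E (x, t) ≠ 0 := by
      rw [Ne, E.map_eq_zero_iff]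
      exact fun h => ht (congrArg Prod.snd h)
    refine hW' (?_ : Projectivization.mk ℂ (E (x, t)) hne ∈ _) (hE.1 x t hne hx ht)
    rw [Set.mem_ofPred_eq, Projectivization.submodule_mk, Submodule.span_singleton_le_iff_mem]
    exact hmem
  apply Set.ext
  intro ℓ'
  rw [Set.mem_singleton_iff]
  constructor
  · rintro ⟨⟨W', hW'2, rfl⟩, hsub⟩
    have hle : W' ≤ W := by
      intro v hv
      rw [hWE]
      obtain ⟨⟨x, t⟩, rfl⟩ := E.surjective v
      rw [LinearEquiv.symm_apply_apply]
      by_contra ht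
      replace ht : t ≠ 0 := ht
      have hx : x = 0 := by
        by_contra hx
        exact hoff W' hsub x t hx ht hv
      subst hx
      -- a second direction in `W'` gives a point off both the origin and the line `t = 0`
      have hns : ¬ W' ≤ Submodule.span ℂ {E (0, t)} := by
        intro h
        have h1 := Submodule.finrank_mono h
        have h2 := finrank_span_le_card (R := ℂ) ({E (0, t)} : Set V3)
        rw [Set.toFinset_singleton, Finset.card_singleton] at h2
        omega
      obtain ⟨u, hu, hus⟩ := SetLike.not_le_iff_exists.mp hns
      obtain ⟨⟨y, s⟩, rfl⟩ := E.surjective u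
      have hy : y ≠ 0 := by
        rintro rfl
        refine hus (Submodule.mem_span_singleton.mpr ⟨s / t, ?_⟩)
        rw [← map_smul, Prod.smul_mk, smul_zero, smul_eq_mul, div_mul_cancel₀ _ ht]
      by_cases hs : s = 0
      · refine hoff W' hsub y t hy ht ?_
        have h3 := W'.add_mem hu hv
        rwa [← map_add, Prod.mk_add_mk, add_zero, hs, zero_add] at h3
      · exact hoff W' hsub y s hy hs hu
    rw [Submodule.eq_of_le_of_finrank_eq hle (hW'2.trans hW.symm)]
  · rintro rfl
    refine ⟨⟨W, hW, rfl⟩, fun p hp => ?_⟩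
    induction p using Projectivization.ind with
    | h v hv =>
      rw [Set.mem_ofPred_eq, Projectivization.submodule_mk, Submodule.span_singleton_le_iff_mem,
        hWE] at hp
      obtain ⟨⟨x, t⟩, rfl⟩ := E.surjective v
      rw [LinearEquiv.symm_apply_apply] at hp
      have ht : t = 0 := hp
      subst ht
      exact hE.2 x hv

lemma LiG_eq_one {Ω : Set P2} {ℓ : Set P2} (h : linesIn Ωᶜ = {ℓ}) : LiG Ω = 1 := by
  have hℓ : ℓ ∈ linesIn Ωᶜ := h ▸ Set.mem_singleton ℓ
  apply le_antisymm
  · refine iSup₂_le fun L hL => ?_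
    have h1 : L ⊆ {ℓ} := fun ℓ' hℓ' => h ▸ hL.1 ℓ' hℓ'
    simpa using Set.encard_le_encard h1
  · rw [← Set.encard_singleton ℓ]
    refine le_iSup₂ (f := fun (L : Set (Set P2)) (_ : L ∈ genFamilies Ω) => L.encard) {ℓ} ?_
    refine ⟨fun ℓ' hℓ' => ?_, fun p ℓ₁ h₁ ℓ₂ h₂ ℓ₃ h₃ _ _ _ => Or.inl ?_⟩
    · rw [Set.mem_singleton_iff.mp hℓ']
      exact hℓ
    · rw [Set.mem_singleton_iff.mp h₁, Set.mem_singleton_iff.mp h₂]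

theorem liG_eqSet_eq_one_of_rotation_restriction
    (Γ : Subgroup PSL3) (hΓ : DiscreteTopology ↥Γ)
    (h1 : LiG ((CSet Γ)ᶜ) = 1)
    (W : Submodule ℂ V3) (hW : Module.finrank ℂ W = 2) (ℓ : Set P2)
    (hℓ : ℓ = {x : P2 | x.submodule ≤ W}) (hsub : ℓ ⊆ CSet Γ)
    (huniq : ∀ ℓ' : Set P2, IsLine ℓ' → ℓ' ⊆ CSet Γ → ℓ' = ℓ)
    (hrot : ∃ ψ : (Fin 2 → ℂ) →ₗ[ℂ] V3, Function.Injective ψ ∧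
      LinearMap.range ψ = W ∧
      ∀ γ ∈ Γ, ∃ A : SL3, (QuotientGroup.mk A : PSL3) = γ ∧
        ∃ c : ℂ, c ≠ 0 ∧ ∃ U ∈ Matrix.unitaryGroup (Fin 2) ℂ,
          ∀ u : Fin 2 → ℂ,
            (A : Matrix (Fin 3) (Fin 3) ℂ).mulVec (ψ u) = ψ (c • U.mulVec u)) :
    LiG (eqSet Γ) = 1 := by
  obtain ⟨ψ, hψ, hrange, hψΓ⟩ := hrot
  obtain ⟨E, hWE, hsim⟩ := exists_simGroup Γ W hW ψ hψ hrange hψΓ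
  have hinf : Infinite Γ := by
    by_contra hfin
    rw [not_infinite_iff_finite] at hfin
    rw [CSet_eq_empty_of_finite Γ] at hsub
    obtain ⟨v, hv, hv0⟩ := W.exists_mem_ne_zero_of_ne_bot (by
      rintro rfl
      rw [finrank_bot] at hW
      exact two_ne_zero hW.symm)
    refine hsub (?_ : Projectivization.mk ℂ v hv0 ∈ ℓ)
    rw [hℓ, Set.mem_ofPred_eq, Projectivization.submodule_mk,
      Submodule.span_singleton_le_iff_mem]
    exact hv
  obtain ⟨E', hE'E, hgood⟩ := exists_goodCoords E Γ hΓ hinf hsim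
  exact LiG_eq_one (linesIn_compl_eqSet E' Γ hgood W hW fun v => by rw [hWE v, hE'E v])
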